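/- arXiv:2410.13239 — 3 statements merged into one kernel-verified Lean document; each statement's English description precedes it below -/
import Mathlib

section
/- Let (R, m, k) be a one-dimensional Gorenstein local ring which is not regular. Then the minimal number of generators of the R-module Hom_R(m, R) is exactly 2. -/
open CategoryTheory IsLocalRing Pointwise

noncomputable section

/-- The `i`-th Ext group of `M` and `N` over `R`. -/
abbrev extGroup (R : Type) [CommRing R] (M N : Type) [AddCommGroup M] [Module R M]
    [AddCommGroup N] [Module R N] (i : ℕ) : Type :=
  ((Ext R (ModuleCat R) i).obj (Opposite.op (ModuleCat.of R M))).obj (ModuleCat.of R N)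

/-- The `i`-th Tor group of `M` and `N` over `R`. -/
abbrev torGroup (R : Type) [CommRing R] (M N : Type) [AddCommGroup M] [Module R M]
    [AddCommGroup N] [Module R N] (i : ℕ) : Type :=
  ((Tor (ModuleCat R) i).obj (ModuleCat.of R M)).obj (ModuleCat.of R N)

/-- The depth of a module over a local ring, defined via vanishing of `Ext(k, M)`;
it is `⊤` if no Ext module is nonzero. -/
def eDepth (R : Type) [CommRing R] [IsLocalRing R] (M : Type) [AddCommGroup M] [Module R M] :
    ℕ∞ :=
  sInf ((↑) '' {i : ℕ | Nontrivial (extGroup R (ResidueField R) M i)})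

/-- The projective dimension of a module, via vanishing of Ext; `⊤` if not finite. -/
def ePd (R : Type) [CommRing R] (M : Type) [AddCommGroup M] [Module R M] : ℕ∞ :=
  sInf ((↑) '' {n : ℕ | ∀ (N : ModuleCat R) (i : ℕ), n < i →
    Subsingleton (((Ext R (ModuleCat R) i).obj (Opposite.op (ModuleCat.of R M))).obj N)})

/-- A local ring is regular if its maximal ideal is generated by `dim R` many elements. -/
def IsRegularLocal (R : Type) [CommRing R] [IsLocalRing R] : Prop :=
  ∃ s : Finset R, Ideal.span (s : Set R) = maximalIdeal R ∧
    (s.card : WithBot (WithTop ℕ)) = ringKrullDim R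

/-- A local ring is Gorenstein if `R` has finite injective dimension as a module over itself,
expressed via vanishing of `Ext^i(-, R)` for all `i` large. -/
def IsGorensteinLocal (R : Type) [CommRing R] [IsLocalRing R] : Prop :=
  ∃ n : ℕ, ∀ (N : ModuleCat R) (i : ℕ), n < i →
    Subsingleton (((Ext R (ModuleCat R) i).obj (Opposite.op N)).obj (ModuleCat.of R R))

/-- A module is totally reflexive (of Gorenstein dimension zero) if it is finitely
generated, the evaluation map into the double dual is bijective, and
`Ext^i(M, R) = Ext^i(M*, R) = 0` for all `i ≥ 1`. -/
def IsTotallyReflexive (R : Type) [CommRing R] (M : Type) [AddCommGroup M] [Module R M] : Prop :=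
  Module.Finite R M ∧ Function.Bijective (Module.Dual.eval R M) ∧
    (∀ i : ℕ, 1 ≤ i → Subsingleton (extGroup R M R i)) ∧
    (∀ i : ℕ, 1 ≤ i → Subsingleton (extGroup R (Module.Dual R M) R i))

/-- The minimal number of generators of a module. -/
def mu (R : Type) [CommRing R] (M : Type) [AddCommGroup M] [Module R M] : ℕ :=
  sInf {n : ℕ | ∃ s : Finset M, s.card = n ∧ Submodule.span R (s : Set M) = ⊤}

/-!
Write `k = R ⧸ m`. Applying `Hom(-, R)` to `0 → m → R → k → 0` exhibits `Ext¹(k, R)` as the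
quotient of `m*` by the span of the inclusion `ι : m → R`, so the theorem follows from
`Ext¹(k, R)` being cyclic and nonzero, together with `m*` not being cyclic: if `m* = (f)` and
`ι = a • f`, then either `a` is a unit and `Ext¹(k, R) = 0`, or `m = (a)` and `R` is regular.

The homological input is Bass' argument: filtering by primes and applying Nakayama's lemma to
multiplication by a regular element on `R ⧸ p`, the vanishing of `Ext(k, M)` in the top degree
allowed by the injective dimension of a finite module `M` lowers that dimension. Hence if `k`
embeds in a module of projective dimension `n`, any finite injective dimension is at most `n`.

* With `n = 0`: if `k` embedded in `R`, then `R` would be injective, hence zero-dimensional. So `m`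
  contains a regular element `x`.
* With `n = 1`: in dimension one `k` embeds in `R ⧸ xR`, so `R` has injective dimension at most one
  and the cyclic module `Ext¹(R ⧸ xR, R)` surjects onto `Ext¹(k, R)`. The latter is nonzero, as
  otherwise `R` would be injective.
-/

open Abelian

universe u

lemma isPrincipal_top_of_surjective {R M N : Type*} [Semiring R] [AddCommMonoid M]
    [AddCommMonoid N] [Module R M] [Module R N] (h : (⊤ : Submodule R M).IsPrincipal)
    (f : M →ₗ[R] N) (hf : Function.Surjective f) : (⊤ : Submodule R N).IsPrincipal := by
  simpa [LinearMap.range_eq_top.mpr hf] using h.map f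

lemma minimalPrimes_subset_associatedPrimes (R : Type*) [CommRing R] [IsNoetherianRing R] :
    minimalPrimes R ⊆ associatedPrimes R R := by
  have h := Module.associatedPrimes.minimalPrimes_annihilator_subset_associatedPrimes R R
  rwa [Module.annihilator_eq_bot.mpr inferInstance] at h

section Ext

variable {R : Type u} [CommRing R]

lemma shortExact_mkQ_range {A B : Type u} [AddCommGroup A] [Module R A] [AddCommGroup B]
    [Module R B] {f : A →ₗ[R] B} (hf : Function.Injective f) :
    (ModuleCat.shortComplexOfCompEqZero f (LinearMap.range f).mkQ
      f.exact_map_mkQ_range.linearMap_comp_eq_zero).ShortExact :=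
  ModuleCat.shortComplex_shortExact _ f.exact_map_mkQ_range hf (Submodule.mkQ_surjective _)

lemma shortExact_subtype_mkQ {A : Type u} [AddCommGroup A] [Module R A] (N : Submodule R A) :
    (ModuleCat.shortComplexOfCompEqZero N.subtype N.mkQ
      (LinearMap.exact_subtype_mkQ N).linearMap_comp_eq_zero).ShortExact :=
  ModuleCat.shortComplex_shortExact _ (LinearMap.exact_subtype_mkQ N) N.injective_subtype
    N.mkQ_surjective

lemma subsingleton_ext_of_iso {N N' : ModuleCat.{u} R} (e : N ≅ N') (M : ModuleCat.{u} R) (i : ℕ)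
    [Subsingleton (Ext N' M i)] : Subsingleton (Ext N M i) := by
  refine subsingleton_of_forall_eq 0 fun α => ?_
  rw [← Ext.mk₀_id_comp α, ← e.hom_inv_id, ← Ext.mk₀_comp_mk₀_assoc,
    Subsingleton.elim ((Ext.mk₀ e.inv).comp α (zero_add i)) 0, Ext.comp_zero]

lemma subsingleton_ext_X₁ {S : ShortComplex (ModuleCat.{u} R)} (hS : S.ShortExact)
    (M : ModuleCat.{u} R) (i : ℕ) [Subsingleton (Ext S.X₂ M i)]
    [Subsingleton (Ext S.X₃ M (i + 1))] : Subsingleton (Ext S.X₁ M i) := by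
  refine subsingleton_of_forall_eq 0 fun α => ?_
  obtain ⟨β, rfl⟩ :=
    Ext.contravariant_sequence_exact₁ hS M α (add_comm 1 i) (Subsingleton.elim _ _)
  rw [Subsingleton.elim β 0, Ext.comp_zero]

lemma subsingleton_ext_X₂ {S : ShortComplex (ModuleCat.{u} R)} (hS : S.ShortExact)
    (M : ModuleCat.{u} R) (i : ℕ) [Subsingleton (Ext S.X₁ M i)]
    [Subsingleton (Ext S.X₃ M i)] : Subsingleton (Ext S.X₂ M i) := by
  refine subsingleton_of_forall_eq 0 fun α => ?_
  obtain ⟨β, rfl⟩ := Ext.contravariant_sequence_exact₂ hS M α (Subsingleton.elim _ _)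
  rw [Subsingleton.elim β 0, Ext.comp_zero]

lemma subsingleton_ext_to_X₃ {S : ShortComplex (ModuleCat.{u} R)} (hS : S.ShortExact)
    (N : ModuleCat.{u} R) (i : ℕ) [Subsingleton (Ext N S.X₂ i)]
    [Subsingleton (Ext N S.X₁ (i + 1))] : Subsingleton (Ext N S.X₃ i) := by
  refine subsingleton_of_forall_eq 0 fun α => ?_
  obtain ⟨β, rfl⟩ := Ext.covariant_sequence_exact₃ N hS α rfl (Subsingleton.elim _ _)
  rw [Subsingleton.elim β 0, Ext.zero_comp]

lemma precomp_mk₀_surjective_of_injective (M : ModuleCat.{u} R) (n : ℕ)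
    [HasInjectiveDimensionLE M n] {A B : Type u} [AddCommGroup A] [Module R A] [AddCommGroup B]
    [Module R B] {f : A →ₗ[R] B} (hf : Function.Injective f) :
    Function.Surjective ((Ext.mk₀ (ModuleCat.ofHom f)).precompOfLinear R M (zero_add n)) := by
  intro α
  have := HasInjectiveDimensionLT.subsingleton M (n + 1) (1 + n) (add_comm n 1).le
    (ModuleCat.of R (B ⧸ LinearMap.range f))
  exact Ext.contravariant_sequence_exact₁ (shortExact_mkQ_range hf) M α rfl (Subsingleton.elim _ _)

lemma hasProjectiveDimensionLE_one_quotSMulTop {x : R} (reg : IsSMulRegular R x) :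
    HasProjectiveDimensionLE (ModuleCat.of R (QuotSMulTop x R)) 1 := by
  have hS := IsSMulRegular.smulShortComplex_shortExact (M := ModuleCat.of R R) reg
  have hR (n : ℕ) : HasProjectiveDimensionLT (ModuleCat.of R R) (n + 1) := inferInstance
  exact hS.hasProjectiveDimensionLT_X₃ 1 (hR 0) (hR 1)

lemma isPrincipal_top_ext_one_quotSMulTop {x : R} (reg : IsSMulRegular R x) :
    (⊤ : Submodule R
      (Ext (ModuleCat.of R (QuotSMulTop x R)) (ModuleCat.of R R) 1)).IsPrincipal := by
  have hS := IsSMulRegular.smulShortComplex_shortExact (M := ModuleCat.of R R) reg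
  have : Projective ((ModuleCat.of R R).smulShortComplex x).X₂ :=
    inferInstanceAs (Projective (ModuleCat.of R R))
  let e : R ≃ₗ[R] Ext (ModuleCat.of R R) (ModuleCat.of R R) 0 :=
    (LinearMap.ringLmapEquivSelf R R R).symm.trans
      (Ext.linearEquiv₀.trans ModuleCat.homLinearEquiv).symm
  exact isPrincipal_top_of_surjective
    (isPrincipal_top_of_surjective inferInstance e.toLinearMap e.surjective)
    (hS.extClass.precompOfLinear R (ModuleCat.of R R) (add_comm 1 0))
    (precomp_extClass_surjective_of_projective_X₂ (ModuleCat.of R R) hS 0)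

lemma subsingleton_abelianExt_of_subsingleton_ext (N M : ModuleCat.{u} R) (i : ℕ)
    (h : Subsingleton (((_root_.Ext R (ModuleCat R) (i + 1)).obj (Opposite.op N)).obj M)) :
    Subsingleton (Abelian.Ext N M (i + 1)) := by
  let P := projectiveResolution N
  have exactAt : (P.complex.linearYonedaObj R M).ExactAt (i + 1) := by
    rw [HomologicalComplex.exactAt_iff_isZero_homology]
    exact (ModuleCat.isZero_of_subsingleton _).of_iso (P.isoExt (R := R) (i + 1) M).symm
  rw [HomologicalComplex.exactAt_iff' _ i (i + 1) (i + 2) (by simp) (by simp),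
    ShortComplex.moduleCat_exact_iff] at exactAt
  refine subsingleton_of_forall_eq 0 fun α => ?_
  obtain ⟨f, hf, rfl⟩ := P.extMk_surjective α (i + 2) rfl
  rw [P.extMk_eq_zero_iff f (i + 2) rfl hf i rfl]
  exact exactAt f hf

end Ext

section Connecting

variable {R : Type u} [CommRing R] (I : Ideal R) (M : ModuleCat.{u} R)

/-- The connecting map `Hom(I, M) → Ext¹(R ⧸ I, M)` of the short exact sequence
`0 → I → R → R ⧸ I → 0`. -/
def homToExtOne : (I →ₗ[R] M) →ₗ[R] Ext (ModuleCat.of R (R ⧸ I)) M 1 :=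
  (shortExact_subtype_mkQ I).extClass.precompOfLinear R M (add_comm 1 0) ∘ₗ
    (Ext.linearEquiv₀.trans ModuleCat.homLinearEquiv).symm.toLinearMap

lemma homToExtOne_surjective : Function.Surjective (homToExtOne I M) :=
  have : Projective (ModuleCat.of R R) := inferInstance
  (precomp_extClass_surjective_of_projective_X₂ M (shortExact_subtype_mkQ I) 0).comp
    (LinearEquiv.surjective _)

lemma ker_homToExtOne :
    LinearMap.ker (homToExtOne I M) = LinearMap.range (LinearMap.lcomp R M I.subtype) := by
  ext f
  constructor
  · intro hf
    obtain ⟨y, hy⟩ := Ext.contravariant_sequence_exact₁ (shortExact_subtype_mkQ I) M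
      (Ext.mk₀ (ModuleCat.ofHom f)) (add_comm 1 0) hf
    obtain ⟨g, rfl⟩ := (Ext.mk₀_bijective _ _).2 y
    rw [Ext.mk₀_comp_mk₀] at hy
    exact ⟨g.hom, congrArg ModuleCat.Hom.hom ((Ext.mk₀_bijective _ _).1 hy)⟩
  · rintro ⟨g, rfl⟩
    change (shortExact_subtype_mkQ I).extClass.comp
      (Ext.mk₀ (ModuleCat.ofHom I.subtype ≫ ModuleCat.ofHom g)) (add_comm 1 0) = 0
    rw [← Ext.mk₀_comp_mk₀]
    exact ShortComplex.ShortExact.extClass_comp_assoc _ _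

lemma ker_homToExtOne_self :
    LinearMap.ker (homToExtOne I (ModuleCat.of R R)) = Submodule.span R {I.subtype} := by
  rw [ker_homToExtOne]
  ext f
  rw [Submodule.mem_span_singleton]
  constructor
  · rintro ⟨g, rfl⟩
    refine ⟨g 1, LinearMap.ext fun y => ?_⟩
    calc g 1 * (y : R) = (y : R) • g 1 := mul_comm _ _
      _ = g (y : R) := by rw [← map_smul, smul_eq_mul, mul_one]
  · rintro ⟨a, rfl⟩
    exact ⟨LinearMap.mulLeft R a, rfl⟩

lemma exists_span_pair_subtype_eq_top
    (h : (⊤ : Submodule R (Ext (ModuleCat.of R (R ⧸ I)) (ModuleCat.of R R) 1)).IsPrincipal) :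
    ∃ f : Module.Dual R I, Submodule.span R {I.subtype, f} = ⊤ := by
  obtain ⟨α, hα⟩ := h
  obtain ⟨f, rfl⟩ := homToExtOne_surjective I _ α
  refine ⟨f, ?_⟩
  have hmap : (Submodule.span R {f}).map (homToExtOne I (ModuleCat.of R R)) = ⊤ := by
    rw [Submodule.map_span, Set.image_singleton, ← hα]
  rw [Submodule.span_insert, ← ker_homToExtOne_self, sup_comm, ← Submodule.comap_map_eq,
    hmap, Submodule.comap_top]

lemma hasInjectiveDimensionLE_of_forall_ideal (n : ℕ)
    (h : ∀ I : Ideal R, Subsingleton (Ext (ModuleCat.of R (R ⧸ I)) M (n + 1))) :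
    HasInjectiveDimensionLE M n := by
  induction n generalizing M with
  | zero =>
    rw [HasInjectiveDimensionLE, ← injective_iff_hasInjectiveDimensionLT_one,
      ← Module.injective_iff_injective_object, ← Module.Baer.iff_injective,
      Module.Baer.iff_surjective]
    intro I
    have := h I
    rw [← LinearMap.range_eq_top, ← ker_homToExtOne,
      Subsingleton.elim (homToExtOne I M) 0, LinearMap.ker_zero]
  | succ n ih =>
    let E := (EnoughInjectives.presentation M).some
    have hS : (ShortComplex.mk E.f _ (Limits.cokernel.condition E.f)).ShortExact :=
      { exact := ShortComplex.exact_cokernel E.f }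
    rw [HasInjectiveDimensionLE, ← hS.hasInjectiveDimensionLT_X₃_iff n E.injective]
    refine ih _ fun I => ?_
    have := h I
    have := E.injective
    have : Subsingleton (Ext (ModuleCat.of R (R ⧸ I)) E.J (n + 1)) :=
      Ext.subsingleton_of_injective _ _ n
    exact subsingleton_ext_to_X₃ hS _ (n + 1)

end Connecting

section LocalRing

variable {R : Type u} [CommRing R] [IsLocalRing R]

lemma exists_mem_maximalIdeal_isSMulRegular_quotient {p : Ideal R} [p.IsPrime]
    (hp : p ≠ maximalIdeal R) : ∃ x ∈ maximalIdeal R, IsSMulRegular (R ⧸ p) x := by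
  obtain ⟨x, hx, hxp⟩ := SetLike.exists_of_lt ((le_maximalIdeal Ideal.IsPrime.ne_top').lt_of_ne hp)
  refine ⟨x, hx, fun a b hab => mul_left_cancel₀ (a := Ideal.Quotient.mk p x) ?_ ?_⟩
  · rwa [Ne, Ideal.Quotient.eq_zero_iff_mem]
  · simpa [Algebra.smul_def] using hab

lemma span_subtype_eq_top_or_isPrincipal
    (h : (⊤ : Submodule R (Module.Dual R (maximalIdeal R))).IsPrincipal) :
    Submodule.span R {(maximalIdeal R).subtype} = ⊤ ∨ (maximalIdeal R).IsPrincipal := by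
  obtain ⟨f, hf⟩ := h
  obtain ⟨a, ha⟩ := Submodule.mem_span_singleton.mp
    (hf ▸ Submodule.mem_top : (maximalIdeal R).subtype ∈ Submodule.span R {f})
  by_cases ha_unit : IsUnit a
  · left
    rw [← ha, Submodule.span_singleton_smul_eq ha_unit, hf]
  · right
    refine ⟨a, le_antisymm (fun y hy => ?_) ?_⟩
    · have : a * f ⟨y, hy⟩ = y := LinearMap.congr_fun ha ⟨y, hy⟩
      exact Ideal.mem_span_singleton.mpr ⟨_, this.symm⟩
    · simpa using ha_unit

lemma not_isPrincipal_top_dual_maximalIdeal (hm : ¬ (maximalIdeal R).IsPrincipal)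
    [Nontrivial (Ext (ModuleCat.of R (R ⧸ maximalIdeal R)) (ModuleCat.of R R) 1)] :
    ¬ (⊤ : Submodule R (Module.Dual R (maximalIdeal R))).IsPrincipal := by
  intro h
  have hspan := (span_subtype_eq_top_or_isPrincipal h).resolve_right hm
  rw [← ker_homToExtOne_self, LinearMap.ker_eq_top] at hspan
  obtain ⟨α, hα⟩ := exists_ne (0 : Ext (ModuleCat.of R (R ⧸ maximalIdeal R)) (ModuleCat.of R R) 1)
  obtain ⟨f, rfl⟩ := homToExtOne_surjective _ _ α
  exact hα (by rw [hspan, LinearMap.zero_apply])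

variable [IsNoetherianRing R]

lemma subsingleton_ext_of_isSMulRegular (N M : ModuleCat.{u} R) [Module.Finite R N]
    [Module.Finite R M] {x : R} (hx : x ∈ maximalIdeal R) (reg : IsSMulRegular N x) (i : ℕ)
    [Subsingleton (Ext (ModuleCat.of R (QuotSMulTop x N)) M (i + 1))] :
    Subsingleton (Ext N M i) := by
  have top_le : (⊤ : Submodule R (Ext N M i)) ≤ maximalIdeal R • ⊤ := by
    intro α _
    obtain ⟨β, hβ⟩ := Ext.contravariant_sequence_exact₁ reg.smulShortComplex_shortExact M α
      (add_comm 1 i) (Subsingleton.elim (α := Ext (ModuleCat.of R (QuotSMulTop x N)) M (i + 1)) _ _)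
    have hα : α = x • β := by
      rw [← Ext.mk₀_id_comp β, ← Ext.smul_comp, ← Ext.mk₀_smul]
      exact hβ.symm
    exact hα ▸ Submodule.smul_mem_smul hx trivial
  have top_eq_bot := Submodule.eq_bot_of_le_smul_of_le_jacobson_bot _ _ Module.Finite.fg_top top_le
    (maximalIdeal_le_jacobson ⊥)
  exact (Submodule.subsingleton_iff R).mp (subsingleton_of_bot_eq_top top_eq_bot.symm)

lemma subsingleton_ext_of_subsingleton_ext_residue (M : ModuleCat.{u} R) [Module.Finite R M] (i : ℕ)
    [HasInjectiveDimensionLE M i]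
    [Subsingleton (Ext (ModuleCat.of R (R ⧸ maximalIdeal R)) M i)]
    (N : Type u) [AddCommGroup N] [Module R N] [hN : Module.Finite R N] :
    Subsingleton (Ext (ModuleCat.of R N) M i) := by
  induction hN using IsNoetherianRing.induction_on_isQuotientEquivQuotientPrime R with
  | subsingleton N =>
    refine subsingleton_of_forall_eq 0 fun α => ?_
    have id_eq_zero : 𝟙 (ModuleCat.of R N) = 0 :=
      (ModuleCat.isZero_of_subsingleton _).eq_of_src _ _
    rw [← Ext.mk₀_id_comp α, id_eq_zero, Ext.mk₀_zero, Ext.zero_comp]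
  | quotient N p e =>
    have : Subsingleton (Ext (ModuleCat.of R (R ⧸ p.1)) M i) := by
      by_cases hp : p.1 = maximalIdeal R
      · rwa [hp]
      · obtain ⟨x, hx, reg⟩ := exists_mem_maximalIdeal_isSMulRegular_quotient hp
        have := HasInjectiveDimensionLT.subsingleton M (i + 1) (i + 1) le_rfl
          (ModuleCat.of R (QuotSMulTop x (R ⧸ p.1)))
        exact subsingleton_ext_of_isSMulRegular _ M hx reg i
    exact subsingleton_ext_of_iso e.toModuleIso M i
  | exact N₁ N₂ N₃ f g hf hg hfg _ _ =>
    exact subsingleton_ext_X₂ (ModuleCat.shortComplex_shortExact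
      (ModuleCat.shortComplexOfCompEqZero f g hfg.linearMap_comp_eq_zero) hfg hf hg) M i

lemma hasInjectiveDimensionLE_of_subsingleton_ext_residue (M : ModuleCat.{u} R) [Module.Finite R M]
    (n : ℕ) [HasInjectiveDimensionLE M (n + 1)]
    [Subsingleton (Ext (ModuleCat.of R (R ⧸ maximalIdeal R)) M (n + 1))] :
    HasInjectiveDimensionLE M n :=
  hasInjectiveDimensionLE_of_forall_ideal M n fun I =>
    subsingleton_ext_of_subsingleton_ext_residue M (n + 1) (R ⧸ I)

lemma hasInjectiveDimensionLE_of_residue_injective (M : ModuleCat.{u} R) [Module.Finite R M]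
    {m n : ℕ} (hM : HasInjectiveDimensionLE M m) {C : Type u} [AddCommGroup C] [Module R C]
    [HasProjectiveDimensionLE (ModuleCat.of R C) n]
    {φ : (R ⧸ maximalIdeal R) →ₗ[R] C} (hφ : Function.Injective φ) :
    HasInjectiveDimensionLE M n := by
  induction m with
  | zero => exact hasInjectiveDimensionLT_of_ge M 1 (n + 1) (by omega)
  | succ m ih =>
    obtain hnm | hnm := Nat.lt_or_ge m n
    · exact hasInjectiveDimensionLT_of_ge M (m + 2) (n + 1) (by omega)
    · have : Subsingleton (Ext (ModuleCat.of R C) M (m + 1)) :=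
        HasProjectiveDimensionLT.subsingleton _ (n + 1) _ (by omega) M
      have := HasInjectiveDimensionLT.subsingleton M (m + 2) (m + 2) le_rfl
        (ModuleCat.of R (C ⧸ LinearMap.range φ))
      have : Subsingleton (Ext (ModuleCat.of R (R ⧸ maximalIdeal R)) M (m + 1)) :=
        subsingleton_ext_X₁ (shortExact_mkQ_range hφ) M (m + 1)
      exact ih (hasInjectiveDimensionLE_of_subsingleton_ext_residue M m)

lemma eq_maximalIdeal_of_mem_associatedPrimes (M : ModuleCat.{u} R) [Module.Finite R M]
    [HasInjectiveDimensionLE M 0] {p : Ideal R} (hp : p ∈ associatedPrimes R M) :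
    p = maximalIdeal R := by
  by_contra hpm
  obtain ⟨hprime, φ, hφ⟩ := (isAssociatedPrime_iff_exists_injective_linearMap p M).mp hp
  obtain ⟨x, hx, reg⟩ := exists_mem_maximalIdeal_isSMulRegular_quotient hpm
  have := HasInjectiveDimensionLT.subsingleton M 1 1 le_rfl
    (ModuleCat.of R (QuotSMulTop x (R ⧸ p)))
  have := subsingleton_ext_of_isSMulRegular (ModuleCat.of R (R ⧸ p)) M hx reg 0
  have hom_eq_zero : ModuleCat.ofHom φ = 0 :=
    (Ext.homEquiv₀.subsingleton_congr.mp this).elim _ _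
  have φ_eq_zero : φ = 0 := congrArg ModuleCat.Hom.hom hom_eq_zero
  exact one_ne_zero (hφ (by rw [φ_eq_zero, LinearMap.zero_apply, LinearMap.zero_apply] : φ 1 = φ 0))

lemma krullDimLE_zero_of_hasInjectiveDimensionLE_zero
    [HasInjectiveDimensionLE (ModuleCat.of R R) 0] : Ring.KrullDimLE 0 R :=
  Ring.krullDimLE_zero_iff_forall_minimalPrimes_isMaximal.mpr fun _ hp =>
    eq_maximalIdeal_of_mem_associatedPrimes (ModuleCat.of R R)
      (minimalPrimes_subset_associatedPrimes R hp) ▸ maximalIdeal.isMaximal R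

lemma exists_mem_maximalIdeal_isSMulRegular_self {n : ℕ}
    (hR : HasInjectiveDimensionLE (ModuleCat.of R R) n) (hdim : ¬ Ring.KrullDimLE 0 R) :
    ∃ x ∈ maximalIdeal R, IsSMulRegular R x := by
  have hom_eq_zero : Subsingleton ((R ⧸ maximalIdeal R) →ₗ[R] R) := by
    refine subsingleton_of_forall_eq 0 fun φ => ?_
    by_contra hφ
    have : IsSimpleModule R (R ⧸ maximalIdeal R) :=
      isSimpleModule_iff_isCoatom.mpr (Ideal.isMaximal_def.mp inferInstance)
    have := hasInjectiveDimensionLE_of_residue_injective (n := 0) (ModuleCat.of R R) hR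
      (LinearMap.injective_of_ne_zero hφ)
    exact hdim krullDimLE_zero_of_hasInjectiveDimensionLE_zero
  simpa [Ideal.annihilator_quotient] using IsSMulRegular.subsingleton_linearMap_iff.mp hom_eq_zero

lemma exists_injective_residue_quotSMulTop [Ring.KrullDimLE 1 R] {x : R}
    (hx : x ∈ maximalIdeal R) (reg : IsSMulRegular R x) :
    ∃ φ : (R ⧸ maximalIdeal R) →ₗ[R] QuotSMulTop x R, Function.Injective φ := by
  have := nontrivial_quotSMulTop_of_mem_maximalIdeal R hx
  obtain ⟨p, hp⟩ := associatedPrimes.nonempty R (QuotSMulTop x R)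
  have hxp : x ∈ p := hp.annihilator_le
    (Submodule.annihilator_top (R := R) (M := QuotSMulTop x R) ▸ QuotSMulTop.mem_annihilator R x)
  have hpmin : p ∉ minimalPrimes R := fun hpmin => by
    have hzd : x ∈ ⋃ q ∈ associatedPrimes R R, (q : Set R) :=
      Set.mem_biUnion (minimalPrimes_subset_associatedPrimes R hpmin) hxp
    rw [biUnion_associatedPrimes_eq_compl_regular] at hzd
    exact hzd reg
  obtain ⟨hprime, φ, hφ⟩ := (isAssociatedPrime_iff_exists_injective_linearMap p _).mp hp
  have hpmax := (Ring.krullDimLE_one_iff.mp ‹_› p hprime).resolve_left hpmin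
  obtain rfl := eq_maximalIdeal hpmax
  exact ⟨φ, hφ⟩

lemma hasInjectiveDimensionLE_one_self [Ring.KrullDimLE 1 R] {n : ℕ}
    (hR : HasInjectiveDimensionLE (ModuleCat.of R R) n) {x : R} (hx : x ∈ maximalIdeal R)
    (reg : IsSMulRegular R x) : HasInjectiveDimensionLE (ModuleCat.of R R) 1 := by
  obtain ⟨φ, hφ⟩ := exists_injective_residue_quotSMulTop hx reg
  have := hasProjectiveDimensionLE_one_quotSMulTop reg
  exact hasInjectiveDimensionLE_of_residue_injective _ hR hφ

lemma nontrivial_ext_one_residue [HasInjectiveDimensionLE (ModuleCat.of R R) 1]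
    (hdim : ¬ Ring.KrullDimLE 0 R) :
    Nontrivial (Ext (ModuleCat.of R (R ⧸ maximalIdeal R)) (ModuleCat.of R R) 1) := by
  by_contra h
  rw [not_nontrivial_iff_subsingleton] at h
  have := hasInjectiveDimensionLE_of_subsingleton_ext_residue (ModuleCat.of R R) 0
  exact hdim krullDimLE_zero_of_hasInjectiveDimensionLE_zero

lemma isPrincipal_top_ext_one_residue [Ring.KrullDimLE 1 R]
    [HasInjectiveDimensionLE (ModuleCat.of R R) 1] {x : R} (hx : x ∈ maximalIdeal R)
    (reg : IsSMulRegular R x) :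
    (⊤ : Submodule R
      (Ext (ModuleCat.of R (R ⧸ maximalIdeal R)) (ModuleCat.of R R) 1)).IsPrincipal := by
  obtain ⟨φ, hφ⟩ := exists_injective_residue_quotSMulTop hx reg
  exact isPrincipal_top_of_surjective (isPrincipal_top_ext_one_quotSMulTop reg) _
    (precomp_mk₀_surjective_of_injective _ 1 hφ)

end LocalRing

lemma exists_hasInjectiveDimensionLE_of_isGorensteinLocal {R : Type} [CommRing R] [IsLocalRing R]
    (hG : IsGorensteinLocal R) : ∃ n, HasInjectiveDimensionLE (ModuleCat.of R R) n := by
  obtain ⟨n, hn⟩ := hG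
  exact ⟨n, hasInjectiveDimensionLT_of_enoughProjectives _ _ fun N =>
    subsingleton_abelianExt_of_subsingleton_ext N _ n (hn N (n + 1) n.lt_succ_self)⟩

lemma isRegularLocal_of_isPrincipal {R : Type} [CommRing R] [IsLocalRing R]
    (hdim : ringKrullDim R = 1) (h : (maximalIdeal R).IsPrincipal) : IsRegularLocal R := by
  obtain ⟨a, ha⟩ := h
  exact ⟨{a}, by simpa using ha.symm, by rw [hdim, Finset.card_singleton]; rfl⟩

lemma mu_eq_two_of_span_pair {R M : Type} [CommRing R] [AddCommGroup M] [Module R M] {a b : M}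
    (hab : Submodule.span R {a, b} = ⊤) (h : ¬ (⊤ : Submodule R M).IsPrincipal) :
    mu R M = 2 := by
  classical
  have hne : a ≠ b := by
    rintro rfl
    exact h ⟨a, by rw [← hab, Set.pair_eq_singleton]⟩
  refine IsLeast.csInf_eq ⟨⟨{a, b}, Finset.card_pair hne, by simpa using hab⟩, ?_⟩
  rintro _ ⟨s, rfl, hs⟩
  by_contra! hcard
  obtain ⟨c, hc⟩ := Finset.card_le_one_iff_subset_singleton.mp (Nat.le_of_lt_succ hcard)
  refine h ⟨c, (eq_top_iff.mpr ?_).symm⟩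
  rw [← hs]
  exact Submodule.span_mono (by exact_mod_cast hc)

/-- For a one-dimensional non-regular Gorenstein local ring `R`, the minimal number of
generators of `Hom_R(m, R)` is exactly `2`. -/
theorem stmt_6 (R : Type) [CommRing R] [IsNoetherianRing R] [IsLocalRing R]
    (hG : IsGorensteinLocal R) (hdim : ringKrullDim R = 1) (hreg : ¬ IsRegularLocal R) :
    mu R (Module.Dual R (maximalIdeal R)) = 2 := by
  have hdim_le : Ring.KrullDimLE 1 R := by rw [Ring.krullDimLE_iff, hdim, Nat.cast_one]
  have hdim_pos : ¬ Ring.KrullDimLE 0 R := by simp [Ring.krullDimLE_iff, hdim]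
  obtain ⟨n, hR⟩ := exists_hasInjectiveDimensionLE_of_isGorensteinLocal hG
  obtain ⟨x, hx, reg⟩ := exists_mem_maximalIdeal_isSMulRegular_self hR hdim_pos
  have := hasInjectiveDimensionLE_one_self hR hx reg
  have := nontrivial_ext_one_residue hdim_pos
  obtain ⟨f, hf⟩ := exists_span_pair_subtype_eq_top _ (isPrincipal_top_ext_one_residue hx reg)
  exact mu_eq_two_of_span_pair hf
    (not_isPrincipal_top_dual_maximalIdeal (hreg ∘ isRegularLocal_of_isPrincipal hdim))
end
end

section
/- Let (R, m, k) be a commutative Noetherian local ring and G a finitely generated totally reflexive R-module. Then depth G = depth R. -/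
open CategoryTheory IsLocalRing Pointwise

noncomputable section

/-!
Evaluation at the elements of `X` gives a natural map `Ext^i(T, Hom(X, N)) → Hom(X, Ext^i(T, N))`.
It is bijective if `Ext^j(X, N) = 0` for all `j ≥ 1` and `Ext^j(T, N) = 0` for all `j < i`. For `X`
free, cochains on a projective resolution of `T` can be assembled over a basis of `X`. In general,
take `0 → K → F → X → 0` with `F` free: `Hom(-, N)` keeps it exact and `K` inherits the hypothesis,
so injectivity for `X` follows from injectivity for `K` in degree `i - 1`, and surjectivity for `X`
from injectivity for `K` in degree `i`.

Let `T` be the residue field `k` and `X` finitely generated and nonzero. Then `X` surjects onto `k`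
and `Ext^i(k, N)` is killed by the maximal ideal, so `Hom(X, Ext^i(k, N))` vanishes only if
`Ext^i(k, N)` does. Hence `depth Hom(X, N) = depth N`, and `X = G*`, `N = R` gives
`depth G = depth G** = depth R`.
-/

section AbelianExt

universe w v u

variable {C : Type u} [Category.{v} C] [Abelian C]

lemma subsingleton_hom_iff_forall_projectiveResolution {X : C} (P : ProjectiveResolution X)
    (Y : C) :
    Subsingleton (X ⟶ Y) ↔
      ∀ f : P.complex.X 0 ⟶ Y, P.complex.d 1 0 ≫ f = 0 → f = 0 := by
  constructor
  · intro hXY f hf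
    obtain ⟨l, rfl⟩ := Limits.CokernelCofork.IsColimit.desc' P.isColimitCokernelCofork f hf
    have hl : l = 0 := hXY.elim (α := X ⟶ Y) l 0
    rw [hl, Limits.comp_zero]
  · intro hP
    refine subsingleton_of_forall_eq 0 fun g ↦ ?_
    let π₀ : P.complex.X 0 ⟶ X := P.π.f 0
    have : Epi π₀ := inferInstanceAs (Epi (P.π.f 0))
    have hπ₀ : P.complex.d 1 0 ≫ π₀ = 0 := P.complex_d_comp_π_f_zero
    have hg : π₀ ≫ g = 0 := hP _ (by rw [← Category.assoc, hπ₀, Limits.zero_comp])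
    exact (cancel_epi π₀).1 (hg.trans Limits.comp_zero.symm)

lemma subsingleton_ext_obj_iff [HasExt.{w} C] [EnoughProjectives C]
    (R : Type*) [Ring R] [Linear R C] (X Y : C) (i : ℕ) :
    Subsingleton (((Ext R C i).obj (Opposite.op X)).obj Y) ↔
      Subsingleton (Abelian.Ext X Y i) := by
  let P := projectiveResolution X
  rw [← ModuleCat.isZero_iff_subsingleton, (P.isoExt (R := R) i Y).isZero_iff,
    ← HomologicalComplex.exactAt_iff_isZero_homology]
  cases i with
  | zero =>
    rw [HomologicalComplex.exactAt_iff' _ 0 0 1 (by simp) (by simp),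
      ShortComplex.moduleCat_exact_iff, Abelian.Ext.homEquiv₀.subsingleton_congr,
      subsingleton_hom_iff_forall_projectiveResolution P]
    have hd (g : P.complex.X 0 ⟶ Y) : P.complex.d 0 0 ≫ g = 0 := by simp
    exact forall₂_congr fun f _ ↦ ⟨fun ⟨g, hg⟩ ↦ hg.symm.trans (hd g),
      fun hf ↦ ⟨0, (hd 0).trans hf.symm⟩⟩
  | succ n =>
    rw [HomologicalComplex.exactAt_iff' _ n (n + 1) (n + 2) (by simp) (by simp),
      ShortComplex.moduleCat_exact_iff]
    constructor
    · intro hexact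
      refine subsingleton_of_forall_eq 0 fun α ↦ ?_
      obtain ⟨f, hf, rfl⟩ := P.extMk_surjective α (n + 2) rfl
      exact (P.extMk_eq_zero_iff f (n + 2) rfl hf n rfl).2 (hexact f hf)
    · exact fun _ f hf ↦ (P.extMk_eq_zero_iff f (n + 2) rfl hf n rfl).1 (Subsingleton.elim _ _)

lemma subsingleton_ext_X₁_of_projective [HasExt.{w} C] {S : ShortComplex C} (hS : S.ShortExact)
    [Projective S.X₂] (Y : C) (i : ℕ) [Subsingleton (Abelian.Ext S.X₃ Y (i + 2))] :
    Subsingleton (Abelian.Ext S.X₁ Y (i + 1)) := by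
  refine subsingleton_of_forall_eq 0 fun α ↦ ?_
  obtain ⟨β, rfl⟩ := Abelian.Ext.contravariant_sequence_exact₁ hS Y α (add_comm 1 (i + 1))
    (Subsingleton.elim _ _)
  rw [Abelian.Ext.eq_zero_of_projective β, Abelian.Ext.comp_zero]

end AbelianExt

section ExtHom

universe v u

variable {R : Type u} [CommRing R]

/-- The short complex `Hom(S.X₃, N) ⟶ Hom(S.X₂, N) ⟶ Hom(S.X₁, N)` obtained by applying
`Hom(-, N)` to `S`. -/
abbrev linearMapShortComplex (S : ShortComplex (ModuleCat.{v} R)) (N : ModuleCat.{v} R) :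
    ShortComplex (ModuleCat.{v} R) :=
  ModuleCat.shortComplexOfCompEqZero (S.g.hom.lcomp R N) (S.f.hom.lcomp R N) <| by
    ext φ x
    simp

lemma exists_forall_comp_applyₗ_eq {X Q N : ModuleCat.{v} R} {ι : Type*}
    (b : Module.Basis ι R X) (g : ι → (Q ⟶ N)) :
    ∃ f : Q ⟶ ModuleCat.of R (X →ₗ[R] N),
      ∀ j, f ≫ ModuleCat.ofHom (LinearMap.applyₗ (b j)) = g j := by
  refine ⟨ModuleCat.ofHom (b.constr R fun j ↦ (g j).hom).flip, fun j ↦ ?_⟩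
  ext q
  simp

lemma hom_ext_of_basis {X Q N : ModuleCat.{v} R} {ι : Type*} (b : Module.Basis ι R X)
    {f g : Q ⟶ ModuleCat.of R (X →ₗ[R] N)}
    (h : ∀ j, f ≫ ModuleCat.ofHom (LinearMap.applyₗ (b j)) =
      g ≫ ModuleCat.ofHom (LinearMap.applyₗ (b j))) : f = g := by
  ext q : 2
  exact b.ext fun j ↦ LinearMap.congr_fun (congrArg ModuleCat.Hom.hom (h j)) q

variable [Small.{v} R]

lemma shortExact_linearMapShortComplex {S : ShortComplex (ModuleCat.{v} R)} (hS : S.ShortExact)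
    (N : ModuleCat.{v} R) [Subsingleton (Abelian.Ext S.X₃ N 1)] :
    (linearMapShortComplex S N).ShortExact := by
  refine ModuleCat.shortComplex_shortExact _ ?_ ?_ ?_
  · exact LinearMap.exact_lcomp_of_exact_of_surjective _
      ((ShortComplex.ShortExact.moduleCat_exact_iff_function_exact _).1 hS.exact)
      hS.moduleCat_surjective_g
  · exact LinearMap.lcomp_injective_of_surjective _ hS.moduleCat_surjective_g
  · intro φ
    obtain ⟨β, hβ⟩ := Abelian.Ext.contravariant_sequence_exact₁ hS N
      (Abelian.Ext.mk₀ (ModuleCat.ofHom φ)) rfl (Subsingleton.elim _ _)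
    obtain ⟨ψ, rfl⟩ := (Abelian.Ext.mk₀_bijective _ _).2 β
    rw [Abelian.Ext.mk₀_comp_mk₀] at hβ
    exact ⟨ψ.hom, congrArg ModuleCat.Hom.hom ((Abelian.Ext.mk₀_bijective _ _).1 hβ)⟩

/-- The natural map `Ext^i(T, Hom(X, N)) → Hom(X, Ext^i(T, N))` sending a class `α` to
`x ↦ (ev_x)_* α`, where `ev_x : Hom(X, N) → N` is the evaluation at `x`. -/
def extEval (T X N : ModuleCat.{v} R) (i : ℕ) :
    Abelian.Ext T (ModuleCat.of R (X →ₗ[R] N)) i →ₗ[R] X →ₗ[R] Abelian.Ext T N i :=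
  (Abelian.Ext.bilinearCompOfLinear R T _ N i 0 i (add_zero i)).compl₂
    (Abelian.Ext.linearEquiv₀.symm.toLinearMap ∘ₗ
      (ModuleCat.homLinearEquiv (S := R)).symm.toLinearMap ∘ₗ LinearMap.applyₗ)

lemma extEval_apply {T X N : ModuleCat.{v} R} {i : ℕ}
    (α : Abelian.Ext T (ModuleCat.of R (X →ₗ[R] N)) i) (x : X) :
    extEval T X N i α x =
      α.comp (Abelian.Ext.mk₀ (ModuleCat.ofHom (LinearMap.applyₗ x))) (add_zero i) :=
  rfl

lemma extEval_comp_lcomp {T X Y N : ModuleCat.{v} R} {i : ℕ} (f : Y ⟶ X)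
    (α : Abelian.Ext T (ModuleCat.of R (X →ₗ[R] N)) i) :
    extEval T Y N i
        (α.comp (Abelian.Ext.mk₀ (ModuleCat.ofHom (f.hom.lcomp R N))) (add_zero i)) =
      extEval T X N i α ∘ₗ f.hom := by
  ext y
  rw [extEval_apply, Abelian.Ext.comp_assoc_of_third_deg_zero, Abelian.Ext.mk₀_comp_mk₀]
  rfl

lemma extEval_zero_injective (T X N : ModuleCat.{v} R) :
    Function.Injective (extEval T X N 0) := by
  refine (injective_iff_map_eq_zero _).2 fun α hα ↦ ?_
  obtain ⟨f, rfl⟩ := (Abelian.Ext.mk₀_bijective _ _).2 α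
  have hf : f = 0 := by
    ext t x
    have := LinearMap.congr_fun hα x
    rw [extEval_apply, Abelian.Ext.mk₀_comp_mk₀, LinearMap.zero_apply,
      Abelian.Ext.mk₀_eq_zero_iff] at this
    exact LinearMap.congr_fun (congrArg ModuleCat.Hom.hom this) t
  rw [hf, Abelian.Ext.mk₀_zero]

lemma extEval_injective_of_basis (T : ModuleCat.{v} R) {X : ModuleCat.{v} R} (N : ModuleCat.{v} R)
    {ι : Type*} (b : Module.Basis ι R X) (i : ℕ) :
    Function.Injective (extEval T X N i) := by
  cases i with
  | zero => exact extEval_zero_injective T X N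
  | succ n =>
    let P := projectiveResolution T
    refine (injective_iff_map_eq_zero _).2 fun α hα ↦ ?_
    obtain ⟨f, hf, rfl⟩ := P.extMk_surjective α (n + 2) rfl
    have hbd (j : ι) : ∃ g : P.complex.X n ⟶ N,
        P.complex.d (n + 1) n ≫ g = f ≫ ModuleCat.ofHom (LinearMap.applyₗ (b j)) := by
      have hfj :
          P.complex.d (n + 2) (n + 1) ≫ f ≫ ModuleCat.ofHom (LinearMap.applyₗ (b j)) = 0 := by
        rw [← Category.assoc, hf, Limits.zero_comp]
      rw [← P.extMk_eq_zero_iff _ (n + 2) rfl hfj n rfl,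
        ← P.extMk_comp_mk₀ f (n + 2) rfl hf]
      exact LinearMap.congr_fun hα (b j)
    choose g hg using hbd
    obtain ⟨g', hg'⟩ := exists_forall_comp_applyₗ_eq b g
    refine (P.extMk_eq_zero_iff f (n + 2) rfl hf n rfl).2 ⟨g', ?_⟩
    refine hom_ext_of_basis b fun j ↦ ?_
    rw [Category.assoc, hg', hg]

lemma extEval_surjective_of_basis (T : ModuleCat.{v} R) {X : ModuleCat.{v} R} (N : ModuleCat.{v} R)
    {ι : Type*} (b : Module.Basis ι R X) (i : ℕ) :
    Function.Surjective (extEval T X N i) := by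
  intro φ
  let P := projectiveResolution T
  choose f hf hfφ using fun j ↦ P.extMk_surjective (φ (b j)) (i + 1) rfl
  obtain ⟨F, hF⟩ := exists_forall_comp_applyₗ_eq b f
  have hdF : P.complex.d (i + 1) i ≫ F = 0 := hom_ext_of_basis b fun j ↦ by
    rw [Category.assoc, hF, hf, Limits.zero_comp]
  refine ⟨P.extMk F (i + 1) rfl hdF, b.ext fun j ↦ ?_⟩
  rw [extEval_apply, P.extMk_comp_mk₀, ← hfφ]
  simp only [hF]

lemma extEval_injective (T X N : ModuleCat.{v} R) (i : ℕ)
    (hX : ∀ j, Subsingleton (Abelian.Ext X N (j + 1)))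
    (hT : ∀ j < i, Subsingleton (Abelian.Ext T N j)) :
    Function.Injective (extEval T X N i) := by
  induction i generalizing X with
  | zero => exact extEval_zero_injective T X N
  | succ n ih =>
    let S := X.projectiveShortComplex
    have hS : S.ShortExact := X.shortExact_projectiveShortComplex
    have hHom := shortExact_linearMapShortComplex hS N
    have hker : Subsingleton (Abelian.Ext T (linearMapShortComplex S N).X₃ n) :=
      have := hT n n.lt_succ_self
      (ih S.X₁ (fun j ↦ subsingleton_ext_X₁_of_projective hS N j)
        fun j hj ↦ hT j (hj.trans n.lt_succ_self)).subsingleton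
    refine (injective_iff_map_eq_zero _).2 fun α hα ↦ ?_
    have hα_free :
        α.comp (Abelian.Ext.mk₀ (linearMapShortComplex S N).f) (add_zero (n + 1)) = 0 := by
      apply extEval_injective_of_basis T N (Module.Free.chooseBasis R S.X₂) (n + 1)
      rw [map_zero]
      exact (extEval_comp_lcomp S.g α).trans (by rw [hα, LinearMap.zero_comp])
    obtain ⟨β, rfl⟩ := Abelian.Ext.covariant_sequence_exact₁ T hHom α hα_free rfl
    rw [Subsingleton.elim β 0, Abelian.Ext.zero_comp]

lemma extEval_surjective (T X N : ModuleCat.{v} R) (i : ℕ)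
    (hX : ∀ j, Subsingleton (Abelian.Ext X N (j + 1)))
    (hT : ∀ j < i, Subsingleton (Abelian.Ext T N j)) :
    Function.Surjective (extEval T X N i) := by
  intro φ
  let S := X.projectiveShortComplex
  have hS : S.ShortExact := X.shortExact_projectiveShortComplex
  have hHom := shortExact_linearMapShortComplex hS N
  obtain ⟨α, hα⟩ := extEval_surjective_of_basis T N (Module.Free.chooseBasis R S.X₂) i
    (φ ∘ₗ S.g.hom)
  have hα_ker : α.comp (Abelian.Ext.mk₀ (linearMapShortComplex S N).g) (add_zero i) = 0 := by
    apply extEval_injective T S.X₁ N i (fun j ↦ subsingleton_ext_X₁_of_projective hS N j) hT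
    refine (extEval_comp_lcomp S.f α).trans ?_
    rw [hα, map_zero, LinearMap.comp_assoc, ← ModuleCat.hom_comp, ShortComplex.zero,
      ModuleCat.hom_zero, LinearMap.comp_zero]
  obtain ⟨β, rfl⟩ := Abelian.Ext.covariant_sequence_exact₂ T hHom α hα_ker
  exact ⟨β, (LinearMap.cancel_right hS.moduleCat_surjective_g).1
    ((extEval_comp_lcomp S.g β).symm.trans hα)⟩

lemma annihilator_le_annihilator_ext (T N : ModuleCat.{v} R) (i : ℕ) :
    Module.annihilator R T ≤ Module.annihilator R (Abelian.Ext T N i) := by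
  intro r hr
  refine Module.mem_annihilator.2 fun α ↦ ?_
  have hr_id : r • 𝟙 T = 0 := by
    ext t
    exact Module.mem_annihilator.1 hr t
  calc r • α = (Abelian.Ext.mk₀ (r • 𝟙 T)).comp α (zero_add i) := by simp [Abelian.Ext.mk₀_smul]
    _ = 0 := by rw [hr_id, Abelian.Ext.mk₀_zero, Abelian.Ext.zero_comp]

end ExtHom

section LocalRing

lemma nontrivial_linearMap_of_maximalIdeal_le_annihilator {R X E : Type*} [CommRing R]
    [IsLocalRing R] [AddCommGroup X] [Module R X] [Module.Finite R X] [Nontrivial X]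
    [AddCommGroup E] [Module R E] [Nontrivial E]
    (hE : maximalIdeal R ≤ Module.annihilator R E) :
    Nontrivial (X →ₗ[R] E) := by
  obtain ⟨e, he⟩ := exists_ne (0 : E)
  obtain ⟨L, hL⟩ := IsCoatomic.exists_coatom (α := Submodule R X)
  obtain ⟨I, hI, ⟨equiv⟩⟩ :=
    isSimpleModule_iff_quot_maximal.1 (isSimpleModule_iff_isCoatom.2 hL)
  obtain rfl := IsLocalRing.eq_maximalIdeal hI
  let toE : (R ⧸ maximalIdeal R) →ₗ[R] E :=
    (maximalIdeal R).liftQ (LinearMap.toSpanSingleton R E e) fun r hr ↦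
      Module.mem_annihilator.1 (hE hr) e
  obtain ⟨x, hx⟩ := (equiv.surjective.comp L.mkQ_surjective) 1
  refine ⟨toE ∘ₗ equiv.toLinearMap ∘ₗ L.mkQ, 0, fun h ↦ he ?_⟩
  calc e = toE 1 := (one_smul R e).symm
    _ = toE (equiv (L.mkQ x)) := congrArg toE hx.symm
    _ = 0 := LinearMap.congr_fun h x

variable {R : Type} [CommRing R] [IsLocalRing R]

lemma natCast_le_eDepth_iff (M : Type) [AddCommGroup M] [Module R M] (n : ℕ) :
    (n : ℕ∞) ≤ eDepth R M ↔ ∀ i < n,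
      Subsingleton (Abelian.Ext (ModuleCat.of R (ResidueField R)) (ModuleCat.of R M) i) := by
  simp only [eDepth, le_sInf_iff, Set.forall_mem_image, Set.mem_ofPred_eq, Nat.cast_le,
    ← subsingleton_ext_obj_iff R, ← not_nontrivial_iff_subsingleton]
  exact forall_congr' fun i ↦ by rw [← not_imp_not, not_le]

lemma eDepth_congr {M N : Type} [AddCommGroup M] [Module R M] [AddCommGroup N] [Module R N]
    (e : M ≃ₗ[R] N) : eDepth R M = eDepth R N := by
  have hExt (i : ℕ) : extGroup R (ResidueField R) M i ≃ extGroup R (ResidueField R) N i :=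
    (((Ext R (ModuleCat R) i).obj _).mapIso e.toModuleIso).toLinearEquiv.toEquiv
  simp only [eDepth, (hExt _).nontrivial_congr]

lemma subsingleton_ext_residueField_linearMap_iff (X N : ModuleCat.{0} R) [Module.Finite R X]
    [Nontrivial X] (i : ℕ)
    (hX : ∀ j, Subsingleton (Abelian.Ext X N (j + 1)))
    (hN : ∀ j < i, Subsingleton (Abelian.Ext (ModuleCat.of R (ResidueField R)) N j)) :
    Subsingleton (Abelian.Ext (ModuleCat.of R (ResidueField R)) (ModuleCat.of R (X →ₗ[R] N)) i) ↔
      Subsingleton (Abelian.Ext (ModuleCat.of R (ResidueField R)) N i) := by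
  let k := ModuleCat.of R (ResidueField R)
  have hbij : Function.Bijective (extEval k X N i) :=
    ⟨extEval_injective k X N i hX hN, extEval_surjective k X N i hX hN⟩
  have hann : maximalIdeal R ≤ Module.annihilator R (Abelian.Ext k N i) :=
    (Ideal.annihilator_quotient (I := maximalIdeal R)).ge.trans
      (annihilator_le_annihilator_ext k N i)
  rw [(Equiv.ofBijective _ hbij).subsingleton_congr]
  refine ⟨fun h ↦ ?_, fun h ↦ inferInstance⟩
  by_contra hExt
  have := not_subsingleton_iff_nontrivial.1 hExt
  have hHom : Nontrivial (X →ₗ[R] Abelian.Ext k N i) :=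
    nontrivial_linearMap_of_maximalIdeal_le_annihilator hann
  exact not_subsingleton_iff_nontrivial.2 hHom h

theorem eDepth_linearMap_eq (X N : Type) [AddCommGroup X] [Module R X]
    [Module.Finite R X] [Nontrivial X] [AddCommGroup N] [Module R N]
    (hX : ∀ i, 1 ≤ i → Subsingleton (extGroup R X N i)) :
    eDepth R (X →ₗ[R] N) = eDepth R N := by
  have hX' (j : ℕ) : Subsingleton (Abelian.Ext (ModuleCat.of R X) (ModuleCat.of R N) (j + 1)) :=
    (subsingleton_ext_obj_iff R _ _ _).1 (hX (j + 1) j.succ_pos)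
  refine ENat.eq_of_forall_natCast_le_iff fun n ↦ ?_
  rw [natCast_le_eDepth_iff, natCast_le_eDepth_iff]
  induction n with
  | zero => simp
  | succ n ih =>
    rw [Nat.forall_lt_succ_right, Nat.forall_lt_succ_right, ih]
    exact and_congr_right fun hN ↦ subsingleton_ext_residueField_linearMap_iff _ _ n hX' hN

end LocalRing

theorem stmt_9_general (R : Type) [CommRing R] [IsLocalRing R]
    (G : Type) [AddCommGroup G] [Module R G] [Nontrivial G] [Module.Finite R (Module.Dual R G)]
    (hG : Function.Bijective (Module.Dual.eval R G))
    (hExt : ∀ i : ℕ, 1 ≤ i → Subsingleton (extGroup R (Module.Dual R G) R i)) :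
    eDepth R G = eDepth R R := by
  have hdual : Nontrivial (Module.Dual R G) := by
    by_contra h
    rw [not_nontrivial_iff_subsingleton] at h
    exact not_subsingleton G hG.injective.subsingleton
  calc eDepth R G = eDepth R (Module.Dual R (Module.Dual R G)) :=
        eDepth_congr (LinearEquiv.ofBijective _ hG)
    _ = eDepth R R := eDepth_linearMap_eq _ _ hExt

/-- Auslander–Bridger formula in Gorenstein dimension zero: a finitely generated totally
reflexive module `G` over a Noetherian local ring satisfies `depth G = depth R`. -/
theorem stmt_9 (R : Type) [CommRing R] [IsNoetherianRing R] [IsLocalRing R]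
    (G : Type) [AddCommGroup G] [Module R G] [Module.Finite R G] [Nontrivial G]
    (hG : IsTotallyReflexive R G) :
    eDepth R G = eDepth R R :=
  stmt_9_general R G hG.2.1 hG.2.2.2
end
end

section
/- Let (R, m, k) be a commutative Noetherian local ring and let M, N be finitely generated nonzero R-modules with pd_R(M) < ∞. Set q = sup{ i ≥ 0 : Tor_i^R(M,N) ≠ 0 } and assume q < ∞. Then for every prime p ∈ Supp(M ⊗_R N), depth R_p - depth M_p - depth N_p ≤ q. -/
open CategoryTheory IsLocalRing Pointwise

noncomputable section

/-!
Let `R → S` be flat with `S` local; for the theorem `S` is a localization of `R`.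

If `X` is a non-free `S`-module with a finite free presentation `F → G → X → 0`, some `e ∈ F`
outside `𝔪F` has image in `𝔪G`. Then `Extⁱ(k, F ⊗ N) → Extⁱ(k, G ⊗ N)` kills the summand
`Extⁱ(k, e ⊗ N)`, which is nonzero for `i = depth N`. If `F ⊗ N → G ⊗ N` is injective, the long
exact sequence thus forces `depth (X ⊗ N) < depth N`. Climbing a finite resolution of `M` extends
this strict drop to every `X = S ⊗ M` that is not free, as long as the positive `Tor`s of `M` and
`N` vanish over `R`.

With the strict drop, comparing depths along `0 → K → G → X → 0` before and after tensoring with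
`N` gives one half of the depth formula, `depth S + depth (X ⊗ N) ≤ depth X + depth N`, in the
`Tor`-independent case; this contains `q = 0`. Passing from `M` to a syzygy lowers `q` by one and,
unless `depth S ≤ depth (S ⊗ M)`, raises the depth by at most one, so induction on `q` concludes.
-/

open Opposite

section ExtComparison

universe u v w

variable {R : Type*} [Ring R] {C : Type u} [Category.{v} C] [Abelian C] [Linear R C]
  [EnoughProjectives C]

theorem subsingleton_ext_zero_iff (X Y : C) :
    Subsingleton (((Ext R C 0).obj (op X)).obj Y) ↔ Subsingleton (X ⟶ Y) := by
  have : Limits.PreservesLimits ((linearYoneda R C).obj Y ⋙ forget _) :=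
    inferInstanceAs (Limits.PreservesLimits (yoneda.obj Y))
  have : Limits.PreservesLimits ((linearYoneda R C).obj Y) :=
    Limits.preservesLimits_of_reflects_of_preserves _ (forget (ModuleCat R))
  have := Limits.preservesFiniteColimits_rightOp ((linearYoneda R C).obj Y)
  let e := (((linearYoneda R C).obj Y).rightOp.leftDerivedZeroIsoSelf.app X).unop
  exact e.toLinearEquiv.toEquiv.subsingleton_congr.symm

variable [HasExt.{w} C]

theorem subsingleton_ext_succ_iff (X Y : C) (n : ℕ) :
    Subsingleton (((Ext R C (n + 1)).obj (op X)).obj Y) ↔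
      Subsingleton (Abelian.Ext.{w} X Y (n + 1)) := by
  let P : ProjectiveResolution X := ProjectiveResolution.of X
  rw [← ModuleCat.isZero_iff_subsingleton, (P.isoExt (n + 1) Y).isZero_iff,
    ← HomologicalComplex.exactAt_iff_isZero_homology,
    HomologicalComplex.exactAt_iff' _ n (n + 1) (n + 2) (by simp) (by simp),
    ShortComplex.moduleCat_exact_iff]
  constructor
  · intro h
    refine subsingleton_of_forall_eq 0 fun x => ?_
    obtain ⟨f, hf, rfl⟩ := P.extMk_surjective x (n + 2) rfl
    exact (P.extMk_eq_zero_iff f (n + 2) rfl hf n rfl).2 (h f hf)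
  · intro h f hf
    exact (P.extMk_eq_zero_iff f (n + 2) rfl hf n rfl).1 (Subsingleton.elim _ _)

theorem subsingleton_ext_iff (X Y : C) :
    ∀ n, Subsingleton (((Ext R C n).obj (op X)).obj Y) ↔ Subsingleton (Abelian.Ext.{w} X Y n)
  | 0 => (subsingleton_ext_zero_iff X Y).trans Abelian.Ext.homEquiv₀.subsingleton_congr.symm
  | n + 1 => subsingleton_ext_succ_iff X Y n

end ExtComparison

section ExtLongExact

open Limits

universe u v w

variable {C : Type u} [Category.{v} C] [Abelian C] [HasExt.{w} C] (X : C)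

theorem mono_extFunctorObj_zero_map {Y Z : C} (f : Y ⟶ Z) [Mono f] :
    Mono ((Abelian.extFunctorObj X 0).map f) :=
  (AddCommGrpCat.mono_iff_injective _).2 (Abelian.Ext.postcomp_mk₀_injective_of_mono X f)

variable {T : ShortComplex C} {n : ℕ}

theorem mono_extFunctorObj_succ_map_f (hT : T.ShortExact)
    (h : IsZero ((Abelian.extFunctorObj X n).obj T.X₃)) :
    Mono ((Abelian.extFunctorObj X (n + 1)).map T.f) :=
  (Abelian.Ext.covariant_sequence_exact₁' X hT n (n + 1) rfl).mono_g (h.eq_of_src _ _)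

theorem isZero_extFunctorObj_X₃ (hT : T.ShortExact)
    (h₁ : IsZero ((Abelian.extFunctorObj X (n + 1)).obj T.X₁))
    (h₂ : IsZero ((Abelian.extFunctorObj X n).obj T.X₂)) :
    IsZero ((Abelian.extFunctorObj X n).obj T.X₃) :=
  (Abelian.Ext.covariant_sequence_exact₃' X hT n (n + 1) rfl).isZero_of_both_zeros
    (h₂.eq_of_src _ _) (h₁.eq_of_tgt _ _)

theorem extFunctorObj_map_smul_eq_zero {R : Type*} [CommRing R] [Linear R C] {r : R}
    (hr : r • 𝟙 X = 0) {Y Z : C} (f : Y ⟶ Z) : (Abelian.extFunctorObj X n).map (r • f) = 0 := by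
  refine AddCommGrpCat.hom_ext (AddMonoidHom.ext fun (x : Abelian.Ext X Y n) => ?_)
  change x.comp (Abelian.Ext.mk₀ (r • f)) (add_zero n) = 0
  have hx : r • x = 0 := by
    rw [← Abelian.Ext.mk₀_id_comp x, ← Abelian.Ext.smul_comp, ← Abelian.Ext.mk₀_smul, hr,
      Abelian.Ext.mk₀_zero, Abelian.Ext.zero_comp]
  rw [Abelian.Ext.mk₀_smul, Abelian.Ext.comp_smul, ← Abelian.Ext.smul_comp, hx,
    Abelian.Ext.zero_comp]

end ExtLongExact

section Depth

open Limits

variable {S : Type} [CommRing S] [IsLocalRing S]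
  {A B C : Type} [AddCommGroup A] [Module S A] [AddCommGroup B] [Module S B]
  [AddCommGroup C] [Module S C]

/-- The functor `Extⁱ(k, -)` for the residue field `k` of `S`, whose first nonvanishing degree is
the depth. It is based on `Abelian.Ext`, which carries the long exact sequences, rather than on the
derived functor `Ext` in which `eDepth` is phrased. -/
abbrev residueExt (S : Type) [CommRing S] [IsLocalRing S] (i : ℕ) :
    ModuleCat.{0} S ⥤ AddCommGrpCat.{0} :=
  Abelian.extFunctorObj.{0} (ModuleCat.of S (ResidueField S)) i

theorem isZero_residueExt_iff (i : ℕ) :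
    IsZero ((residueExt S i).obj (ModuleCat.of S A)) ↔
      Subsingleton (extGroup S (ResidueField S) A i) :=
  AddCommGrpCat.isZero_iff_subsingleton.trans (subsingleton_ext_iff _ _ i).symm

theorem eDepth_le_of_not_isZero {i : ℕ} (h : ¬ IsZero ((residueExt S i).obj (ModuleCat.of S A))) :
    eDepth S A ≤ i :=
  sInf_le ⟨i, by rwa [isZero_residueExt_iff, not_subsingleton_iff_nontrivial] at h, rfl⟩

theorem isZero_residueExt_of_lt {i : ℕ} (h : i < eDepth S A) :
    IsZero ((residueExt S i).obj (ModuleCat.of S A)) :=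
  by_contra fun h' => (eDepth_le_of_not_isZero h').not_gt h

theorem exists_eDepth_eq_coe (h : eDepth S A ≠ ⊤) :
    ∃ i : ℕ, eDepth S A = i ∧ ¬ IsZero ((residueExt S i).obj (ModuleCat.of S A)) := by
  have hne : ((↑) '' {i : ℕ | Nontrivial (extGroup S (ResidueField S) A i)} : Set ℕ∞).Nonempty :=
    Set.nonempty_iff_ne_empty.2 fun h' => h (by rw [eDepth, h', sInf_empty])
  obtain ⟨i, hi, hi'⟩ := csInf_mem hne
  exact ⟨i, hi'.symm, by rwa [isZero_residueExt_iff, not_subsingleton_iff_nontrivial]⟩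

theorem le_eDepth {a : ℕ∞}
    (h : ∀ i : ℕ, i < a → IsZero ((residueExt S i).obj (ModuleCat.of S A))) : a ≤ eDepth S A := by
  by_contra! hlt
  obtain ⟨i, hi, hi'⟩ := exists_eDepth_eq_coe (ne_top_of_lt hlt)
  exact hi' (h i (hi ▸ hlt))

theorem eDepth_eq_top_of_subsingleton [Subsingleton A] : eDepth S A = ⊤ :=
  top_le_iff.1 <| le_eDepth fun i _ =>
    (residueExt S i).map_isZero (ModuleCat.isZero_of_subsingleton (ModuleCat.of S A))

theorem isZero_residueExt_of_map_id_eq_zero {i : ℕ}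
    (h : (residueExt S i).map (ModuleCat.ofHom (LinearMap.id : A →ₗ[S] A)) = 0) :
    IsZero ((residueExt S i).obj (ModuleCat.of S A)) :=
  (IsZero.iff_id_eq_zero _).2 (((residueExt S i).map_id _).symm.trans h)

theorem eDepth_le_of_leftInverse {s : A →ₗ[S] B} {r : B →ₗ[S] A} (h : r ∘ₗ s = LinearMap.id) :
    eDepth S B ≤ eDepth S A := by
  refine le_eDepth fun i hi => ?_
  have : Mono ((residueExt S i).map (ModuleCat.ofHom s)) := by
    have : IsSplitMono (ModuleCat.ofHom s) := ⟨⟨ModuleCat.ofHom r, by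
      rw [← ModuleCat.ofHom_comp, h, ModuleCat.ofHom_id]⟩⟩
    infer_instance
  exact (isZero_residueExt_of_lt hi).of_mono ((residueExt S i).map (ModuleCat.ofHom s))

theorem eDepth_congr_s14 (e : A ≃ₗ[S] B) : eDepth S A = eDepth S B :=
  le_antisymm (eDepth_le_of_leftInverse e.comp_symm) (eDepth_le_of_leftInverse e.symm_comp)

section ShortExact

variable {f : A →ₗ[S] B} {g : B →ₗ[S] C}

theorem mono_residueExt_map (hf : Function.Injective f) (hfg : Function.Exact f g)
    (hg : Function.Surjective g) {i : ℕ} (hi : i < eDepth S C + 1) :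
    Mono ((residueExt S i).map (ModuleCat.ofHom f)) := by
  cases i with
  | zero =>
    have := (ModuleCat.mono_iff_injective (ModuleCat.ofHom f)).2 hf
    exact mono_extFunctorObj_zero_map _ _
  | succ j =>
    have hj : (j : ℕ∞) < eDepth S C := lt_of_add_lt_add_right (a := 1) (mod_cast hi)
    let T := ModuleCat.shortComplexOfCompEqZero f g hfg.linearMap_comp_eq_zero
    have hT : T.ShortExact := ModuleCat.shortComplex_shortExact T hfg hf hg
    exact mono_extFunctorObj_succ_map_f (T := T) _ hT (isZero_residueExt_of_lt hj)

theorem min_eDepth_le_eDepth_left (hf : Function.Injective f) (hfg : Function.Exact f g)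
    (hg : Function.Surjective g) : min (eDepth S B) (eDepth S C + 1) ≤ eDepth S A := by
  refine le_eDepth fun i hi => ?_
  have := mono_residueExt_map hf hfg hg (lt_min_iff.1 hi).2
  exact (isZero_residueExt_of_lt (lt_min_iff.1 hi).1).of_mono
    ((residueExt S i).map (ModuleCat.ofHom f))

theorem min_eDepth_le_eDepth_right_add_one (hf : Function.Injective f)
    (hfg : Function.Exact f g) (hg : Function.Surjective g) :
    min (eDepth S A) (eDepth S B + 1) ≤ eDepth S C + 1 := by
  by_cases hC : eDepth S C = ⊤
  · simp [hC]
  obtain ⟨t, ht, ht'⟩ := exists_eDepth_eq_coe hC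
  rw [ht, min_le_iff]
  by_contra! h
  have hB : (t : ℕ∞) < eDepth S B := lt_of_add_lt_add_right h.2
  let T := ModuleCat.shortComplexOfCompEqZero f g hfg.linearMap_comp_eq_zero
  have hT : T.ShortExact := ModuleCat.shortComplex_shortExact T hfg hf hg
  exact ht' (isZero_extFunctorObj_X₃ (T := T) _ hT (isZero_residueExt_of_lt (mod_cast h.1))
    (isZero_residueExt_of_lt hB))

end ShortExact

end Depth

section LocalAlgebra

open TensorProduct

variable {S : Type*} [CommRing S] {F G X N : Type*} [AddCommGroup F] [Module S F]
  [AddCommGroup G] [Module S G] [AddCommGroup X] [Module S X] [AddCommGroup N] [Module S N]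

theorem lid_comp_rTensor_comp_mk {φ : Module.Dual S F} {e : F} (h : φ e = 1) :
    ((TensorProduct.lid S N).toLinearMap ∘ₗ φ.rTensor N) ∘ₗ TensorProduct.mk S F N e =
      LinearMap.id := by
  ext; simp [h]

variable [IsLocalRing S]

theorem smul_id_residueField_eq_zero {r : S} (hr : r ∈ maximalIdeal S) :
    r • 𝟙 (ModuleCat.of S (ResidueField S)) = 0 := by
  ext x
  change r • x = 0
  rw [Algebra.smul_def, ResidueField.algebraMap_eq, (residue_eq_zero_iff r).2 hr, zero_mul]

theorem one_tmul_eq_zero_iff_mem_smul_top {x : F} :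
    (1 : ResidueField S) ⊗ₜ[S] x = 0 ↔ x ∈ maximalIdeal S • (⊤ : Submodule S F) := by
  have h : quotTensorEquivQuotSMul F (maximalIdeal S) (1 ⊗ₜ[S] x) = Submodule.Quotient.mk x := by
    simp
  rw [← Submodule.Quotient.mk_eq_zero, ← h]
  exact (quotTensorEquivQuotSMul F (maximalIdeal S)).map_eq_zero_iff.symm

theorem exists_dual_apply_eq_one [Module.Free S F] {e : F}
    (he : e ∉ maximalIdeal S • (⊤ : Submodule S F)) : ∃ φ : Module.Dual S F, φ e = 1 := by
  let b := Module.Free.chooseBasis S F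
  obtain ⟨a, u, hu⟩ : ∃ a, IsUnit (b.repr e a) := by
    by_contra! h
    refine he ?_
    rw [← b.linearCombination_repr e, Finsupp.linearCombination_apply]
    exact Submodule.sum_mem _ fun a _ =>
      Submodule.smul_mem_smul ((mem_maximalIdeal _).2 (h a)) trivial
  exact ⟨(↑u⁻¹ : S) • b.coord a, by simp [← hu]⟩

theorem exists_notMem_smul_top_map_mem [Module.Free S G] [Module.Finite S F] [Module.Finite S G]
    {f : F →ₗ[S] G} {g : G →ₗ[S] X} (hfg : Function.Exact f g) (hg : Function.Surjective g)
    (hX : ¬ Module.Free S X) :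
    ∃ e ∉ maximalIdeal S • (⊤ : Submodule S F), f e ∈ maximalIdeal S • (⊤ : Submodule S G) := by
  have hf : ¬ Function.Injective (f.lTensor (ResidueField S)) := fun h =>
    hX (Module.free_of_lTensor_residueField_injective f g hg hfg h)
  simp only [injective_iff_map_eq_zero, not_forall] at hf
  obtain ⟨z, hz, hz0⟩ := hf
  obtain ⟨e, rfl⟩ := TensorProduct.mk_surjective S F (ResidueField S) residue_surjective z
  exact ⟨e, mt one_tmul_eq_zero_iff_mem_smul_top.2 hz0, one_tmul_eq_zero_iff_mem_smul_top.1 hz⟩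

end LocalAlgebra

section MinimalMaps

open Limits TensorProduct

variable {S : Type} [CommRing S] [IsLocalRing S] {F G X N : Type} [AddCommGroup F] [Module S F]
  [AddCommGroup G] [Module S G] [AddCommGroup X] [Module S X] [AddCommGroup N] [Module S N]

theorem residueExt_map_mk_eq_zero {y : F} (hy : y ∈ maximalIdeal S • (⊤ : Submodule S F)) (i : ℕ) :
    (residueExt S i).map (ModuleCat.ofHom (TensorProduct.mk S F N y)) = 0 := by
  induction hy using Submodule.smul_induction_on' with
  | smul r hr x _ =>
    rw [map_smul]
    exact extFunctorObj_map_smul_eq_zero (R := S) (Y := ModuleCat.of S N)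
      (Z := ModuleCat.of S (F ⊗[S] N)) _ (smul_id_residueField_eq_zero hr)
      (ModuleCat.ofHom (TensorProduct.mk S F N x))
  | add x _ y _ hx hy => rw [map_add, ModuleCat.ofHom_add, Functor.map_add, hx, hy, add_zero]

theorem not_mono_residueExt_map_rTensor [Module.Free S F] [Module.Free S G] [Module.Finite S F]
    [Module.Finite S G] {f : F →ₗ[S] G} {g : G →ₗ[S] X} (hfg : Function.Exact f g)
    (hg : Function.Surjective g) (hX : ¬ Module.Free S X) {i : ℕ}
    (hN : ¬ IsZero ((residueExt S i).obj (ModuleCat.of S N))) :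
    ¬ Mono ((residueExt S i).map (ModuleCat.ofHom (f.rTensor N))) := by
  intro hmono
  -- `φ e = 1` makes `e ⊗ N ≅ N` a direct summand of `F ⊗ N`, on which `Extⁱ(k, f ⊗ N)` vanishes
  -- because `f e` has coefficients in the maximal ideal.
  obtain ⟨e, he, hfe⟩ := exists_notMem_smul_top_map_mem hfg hg hX
  obtain ⟨φ, hφ⟩ := exists_dual_apply_eq_one he
  let s := TensorProduct.mk S F N e
  have hs : (residueExt S i).map (ModuleCat.ofHom s) = 0 := by
    rw [← cancel_mono ((residueExt S i).map (ModuleCat.ofHom (f.rTensor N))), ← Functor.map_comp,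
      ← ModuleCat.ofHom_comp, zero_comp]
    exact residueExt_map_mk_eq_zero hfe i
  refine hN (isZero_residueExt_of_map_id_eq_zero ?_)
  rw [← lid_comp_rTensor_comp_mk hφ, ModuleCat.ofHom_comp, Functor.map_comp, hs, zero_comp]

end MinimalMaps

section FreeTensor

open Limits TensorProduct

universe v

variable {S : Type} [CommRing S] [IsLocalRing S]
  {F N : Type} [AddCommGroup F] [Module S F] [Module.Free S F] [AddCommGroup N] [Module S N]

theorem eDepth_tensor_le_of_free [Nontrivial F] : eDepth S (F ⊗[S] N) ≤ eDepth S N := by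
  let b := Module.Free.chooseBasis S F
  obtain ⟨a⟩ := b.index_nonempty
  exact eDepth_le_of_leftInverse
    (lid_comp_rTensor_comp_mk (φ := b.coord a) (e := b a) (by simp))

theorem moduleCatOfHom_sum {R ι : Type*} [Ring R] {A B : Type v} [AddCommGroup A] [Module R A]
    [AddCommGroup B] [Module R B] (s : Finset ι) (f : ι → A →ₗ[R] B) :
    ModuleCat.ofHom (∑ a ∈ s, f a) = ∑ a ∈ s, ModuleCat.ofHom (f a) :=
  map_sum (ModuleCat.homAddEquiv (M := ModuleCat.of R A) (N := ModuleCat.of R B)).symm f s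

theorem le_eDepth_tensor_of_free [Module.Finite S F] : eDepth S N ≤ eDepth S (F ⊗[S] N) := by
  let b := Module.Free.chooseBasis S F
  have hid : (LinearMap.id : F ⊗[S] N →ₗ[S] F ⊗[S] N) =
      ∑ a, TensorProduct.mk S F N (b a) ∘ₗ (TensorProduct.lid S N).toLinearMap ∘ₗ
        (b.coord a).rTensor N := by
    refine TensorProduct.ext' fun x y => ?_
    simp [TensorProduct.smul_tmul', ← TensorProduct.sum_tmul, b.sum_repr]
  refine le_eDepth fun i hi => isZero_residueExt_of_map_id_eq_zero ?_
  rw [hid, moduleCatOfHom_sum, Functor.map_sum]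
  refine Finset.sum_eq_zero fun a _ => ?_
  rw [ModuleCat.ofHom_comp, Functor.map_comp, (isZero_residueExt_of_lt hi).eq_of_src
    ((residueExt S i).map (ModuleCat.ofHom (TensorProduct.mk S F N (b a)))) 0, comp_zero]

theorem eDepth_self_le_of_free [Module.Finite S F] : eDepth S S ≤ eDepth S F :=
  le_eDepth_tensor_of_free.trans_eq (eDepth_congr_s14 (TensorProduct.rid S F))

end FreeTensor

section Syzygy

open TensorProduct

variable {S : Type} [CommRing S] [IsLocalRing S]
  {K G X N : Type} [AddCommGroup K] [Module S K] [AddCommGroup G] [Module S G] [Module.Free S G]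
  [Module.Finite S G] [AddCommGroup X] [Module S X] [AddCommGroup N] [Module S N]
  {f : K →ₗ[S] G} {g : G →ₗ[S] X}

theorem min_eDepth_syzygy_le (hf : Function.Injective f) (hfg : Function.Exact f g)
    (hg : Function.Surjective g) : min (eDepth S K) (eDepth S S + 1) ≤ eDepth S X + 1 :=
  (min_le_min_left _ (add_le_add_left eDepth_self_le_of_free 1)).trans
    (min_eDepth_le_eDepth_right_add_one hf hfg hg)

theorem min_eDepth_tensor_le_syzygy (hfg : Function.Exact f g) (hg : Function.Surjective g)
    (hfN : Function.Injective (f.rTensor N)) :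
    min (eDepth S N) (eDepth S (X ⊗[S] N) + 1) ≤ eDepth S (K ⊗[S] N) :=
  (min_le_min_right _ le_eDepth_tensor_of_free).trans <|
    min_eDepth_le_eDepth_left hfN (rTensor_exact N hfg hg) (LinearMap.rTensor_surjective N hg)

theorem eDepth_tensor_add_one_le_of_syzygy_free [Module.Free S K] [Module.Finite S K]
    (hfg : Function.Exact f g) (hg : Function.Surjective g)
    (hfN : Function.Injective (f.rTensor N)) (hX : ¬ Module.Free S X) :
    eDepth S (X ⊗[S] N) + 1 ≤ eDepth S N := by
  by_cases hN : eDepth S N = ⊤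
  · simp [hN]
  obtain ⟨t, ht, hne⟩ := exists_eDepth_eq_coe hN
  by_contra! hlt
  exact not_mono_residueExt_map_rTensor hfg hg hX hne <|
    mono_residueExt_map hfN (rTensor_exact N hfg hg) (LinearMap.rTensor_surjective N hg) (ht ▸ hlt)

theorem eDepth_tensor_add_one_le_of_syzygy (hfg : Function.Exact f g) (hg : Function.Surjective g)
    (hfN : Function.Injective (f.rTensor N)) (hK : eDepth S (K ⊗[S] N) + 1 ≤ eDepth S N) :
    eDepth S (X ⊗[S] N) + 1 ≤ eDepth S N := by
  by_cases hN : eDepth S N = ⊤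
  · simp [hN]
  have hKN : eDepth S (K ⊗[S] N) < eDepth S N := (ENat.add_one_le_iff' hN).1 hK
  exact ((min_le_iff.1 (min_eDepth_tensor_le_syzygy hfg hg hfN)).resolve_left hKN.not_ge).trans
    hKN.le

theorem eDepth_add_eDepth_tensor_le_of_syzygy (hf : Function.Injective f)
    (hfg : Function.Exact f g) (hg : Function.Surjective g)
    (hfN : Function.Injective (f.rTensor N)) (hX : eDepth S (X ⊗[S] N) + 1 ≤ eDepth S N)
    (hK : eDepth S S + eDepth S (K ⊗[S] N) ≤ eDepth S K + eDepth S N) :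
    eDepth S S + eDepth S (X ⊗[S] N) ≤ eDepth S X + eDepth S N := by
  have hXK : eDepth S (X ⊗[S] N) + 1 ≤ eDepth S (K ⊗[S] N) := by
    simpa only [min_eq_right hX] using min_eDepth_tensor_le_syzygy hfg hg hfN
  rcases min_le_iff.1 (min_eDepth_syzygy_le hf hfg hg) with h | h
  · refine (ENat.add_le_add_iff_right ENat.one_ne_top).1 ?_
    calc eDepth S S + eDepth S (X ⊗[S] N) + 1
        ≤ eDepth S S + eDepth S (K ⊗[S] N) := by rw [add_assoc]; gcongr
      _ ≤ eDepth S K + eDepth S N := hK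
      _ ≤ eDepth S X + 1 + eDepth S N := by gcongr
      _ = eDepth S X + eDepth S N + 1 := add_right_comm _ _ _
  · exact add_le_add ((ENat.add_le_add_iff_right ENat.one_ne_top).1 h) (le_self_add.trans hX)

theorem eDepth_add_eDepth_tensor_le_of_free :
    eDepth S S + eDepth S (G ⊗[S] N) ≤ eDepth S G + eDepth S N := by
  rcases subsingleton_or_nontrivial G with _ | _
  · simp [eDepth_eq_top_of_subsingleton (S := S) (A := G)]
  · exact add_le_add eDepth_self_le_of_free eDepth_tensor_le_of_free

theorem eDepth_self_le_add_one_of_syzygy (hf : Function.Injective f) (hfg : Function.Exact f g)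
    (hg : Function.Surjective g) {a : ℕ∞} (hK : eDepth S S ≤ eDepth S K + a) :
    eDepth S S ≤ eDepth S X + a + 1 := by
  rcases min_le_iff.1 (min_eDepth_syzygy_le hf hfg hg) with h | h
  · calc eDepth S S ≤ eDepth S K + a := hK
      _ ≤ eDepth S X + 1 + a := by gcongr
      _ = eDepth S X + a + 1 := add_right_comm _ _ _
  · rw [add_assoc]
    exact ((ENat.add_le_add_iff_right ENat.one_ne_top).1 h).trans le_self_add

end Syzygy

section FlatTensor

open TensorProduct

variable {R : Type*} [CommRing R] {P₀ P₁ P₂ K F X : Type*}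
  [AddCommGroup P₀] [Module R P₀] [AddCommGroup P₁] [Module R P₁] [AddCommGroup P₂] [Module R P₂]
  [AddCommGroup K] [Module R K] [AddCommGroup F] [Module R F] [AddCommGroup X] [Module R X]

theorem lTensor_exact_iff_injective_lTensor_subtype_range {d₂ : P₂ →ₗ[R] P₁} {d₁ : P₁ →ₗ[R] P₀}
    (h : Function.Exact d₂ d₁) :
    Function.Exact (d₂.lTensor X) (d₁.lTensor X) ↔
      Function.Injective ((LinearMap.range d₁).subtype.lTensor X) := by
  have hd₁ : d₁.lTensor X =
      (LinearMap.range d₁).subtype.lTensor X ∘ₗ d₁.rangeRestrict.lTensor X := by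
    rw [← LinearMap.lTensor_comp]; rfl
  have hsurj := LinearMap.lTensor_surjective X d₁.surjective_rangeRestrict
  have hexact : Function.Exact (d₂.lTensor X) (d₁.rangeRestrict.lTensor X) :=
    lTensor_exact X (fun x => by simpa [Subtype.ext_iff] using h x) d₁.surjective_rangeRestrict
  rw [hd₁]
  refine ⟨fun hX => (injective_iff_map_eq_zero _).2 fun z hz => ?_,
    fun hX => hexact.comp_injective _ hX (map_zero _)⟩
  obtain ⟨w, rfl⟩ := hsurj z
  exact (hexact w).2 ((hX w).1 hz)

theorem injective_rTensor_of_injective_lTensor [Module.Flat R P₁] {i : P₂ →ₗ[R] P₁}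
    {p : P₁ →ₗ[R] P₀} (hip : Function.Exact i p) (hp : Function.Surjective p)
    {f : K →ₗ[R] F} {g : F →ₗ[R] X} (hf : Function.Injective f) (hfg : Function.Exact f g)
    (hg : Function.Surjective g) (hiX : Function.Injective (i.lTensor X)) :
    Function.Injective (f.rTensor P₀) := by
  rw [← LinearMap.lTensor_inj_iff_rTensor_inj]
  exact lTensor_injective_of_exact_of_exact_of_rTensor_injective hip hp hfg hg
    ((LinearMap.lTensor_inj_iff_rTensor_inj _ _).1 hiX)
    (Module.Flat.lTensor_preserves_injective_linearMap f hf)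

theorem injective_lTensor_of_injective_rTensor [Module.Flat R F] {i : P₁ →ₗ[R] P₀}
    (hi : Function.Injective i) {f : K →ₗ[R] F} (hf : Function.Injective (f.rTensor P₁)) :
    Function.Injective (i.lTensor K) := by
  have hcomp : f.rTensor P₀ ∘ₗ i.lTensor K = i.lTensor F ∘ₗ f.rTensor P₁ := by
    rw [LinearMap.rTensor_comp_lTensor, LinearMap.lTensor_comp_rTensor]
  refine Function.Injective.of_comp (f := f.rTensor P₀) ?_
  rw [← LinearMap.coe_comp, hcomp]
  exact (Module.Flat.lTensor_preserves_injective_linearMap i hi).comp hf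

end FlatTensor

section Tor

open TensorProduct

variable {R : Type} [CommRing R] {N K F X : Type} [AddCommGroup N] [Module R N]
  [AddCommGroup K] [Module R K] [AddCommGroup F] [Module R F] [AddCommGroup X] [Module R X]

section Resolution

variable (P : ProjectiveResolution (ModuleCat.of R N))

theorem exact_projectiveResolution_d (n : ℕ) :
    Function.Exact (P.complex.d (n + 2) (n + 1)).hom (P.complex.d (n + 1) n).hom :=
  (ShortComplex.ShortExact.moduleCat_exact_iff_function_exact _).1 (P.exact_succ n)

theorem flat_projectiveResolution_X (n : ℕ) : Module.Flat R (P.complex.X n) :=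
  have := (IsProjective.iff_projective _).2 (P.projective n)
  inferInstance

theorem subsingleton_torGroup_succ_iff (n : ℕ) :
    Subsingleton (torGroup R X N (n + 1)) ↔
      Function.Injective ((LinearMap.range (P.complex.d (n + 1) n).hom).subtype.lTensor X) := by
  rw [← lTensor_exact_iff_injective_lTensor_subtype_range (exact_projectiveResolution_d P n),
    ← ModuleCat.isZero_iff_subsingleton]
  refine (P.isoLeftDerivedObj ((MonoidalCategory.tensoringLeft (ModuleCat R)).obj
    (ModuleCat.of R X)) (n + 1)).isZero_iff.trans ?_
  change Limits.IsZero (HomologicalComplex.homology _ (n + 1)) ↔ _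
  rw [← HomologicalComplex.exactAt_iff_isZero_homology,
    HomologicalComplex.exactAt_iff' _ (n + 2) (n + 1) n (by simp) (by simp),
    ShortComplex.ShortExact.moduleCat_exact_iff_function_exact]
  rfl

end Resolution

variable {f : K →ₗ[R] F} {g : F →ₗ[R] X}

theorem injective_rTensor_of_subsingleton_torGroup_one (hf : Function.Injective f)
    (hfg : Function.Exact f g) (hg : Function.Surjective g)
    (h : Subsingleton (torGroup R X N 1)) : Function.Injective (f.rTensor N) := by
  let P := ProjectiveResolution.of (ModuleCat.of R N)
  have := flat_projectiveResolution_X P 0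
  have hexact : Function.Exact (P.complex.d 1 0).hom (P.π.f 0).hom :=
    (ShortComplex.ShortExact.moduleCat_exact_iff_function_exact _).1 P.exact₀
  have hsurj : Function.Surjective (P.π.f 0).hom :=
    (ModuleCat.epi_iff_surjective (P.π.f 0)).1 inferInstance
  exact injective_rTensor_of_injective_lTensor (p := (P.π.f 0).hom)
    (LinearMap.exact_iff.2 (by simpa using LinearMap.exact_iff.1 hexact)) hsurj hf hfg hg
    ((subsingleton_torGroup_succ_iff P 0).1 h)

theorem subsingleton_torGroup_syzygy [Module.Flat R F] (hf : Function.Injective f)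
    (hfg : Function.Exact f g) (hg : Function.Surjective g) {n : ℕ}
    (h : Subsingleton (torGroup R X N (n + 2))) : Subsingleton (torGroup R K N (n + 1)) := by
  let P := ProjectiveResolution.of (ModuleCat.of R N)
  have := flat_projectiveResolution_X P (n + 1)
  rw [subsingleton_torGroup_succ_iff P] at h ⊢
  have hexact : Function.Exact (LinearMap.range (P.complex.d (n + 2) (n + 1)).hom).subtype
      (P.complex.d (n + 1) n).hom.rangeRestrict := by
    rw [LinearMap.exact_iff, LinearMap.ker_rangeRestrict, Submodule.range_subtype]
    exact LinearMap.exact_iff.1 (exact_projectiveResolution_d P n)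
  exact injective_lTensor_of_injective_rTensor (Submodule.subtype_injective _)
    (injective_rTensor_of_injective_lTensor hexact (LinearMap.surjective_rangeRestrict _)
      hf hfg hg h)

end Tor

section FiniteProjectiveDimension

universe u

theorem exists_hasProjectiveDimensionLE_of_ePd_lt_top {R : Type} [CommRing R] {M : Type}
    [AddCommGroup M] [Module R M] (h : ePd R M < ⊤) :
    ∃ n, HasProjectiveDimensionLE (ModuleCat.of R M) n := by
  obtain ⟨_, ⟨n, hn, rfl⟩, -⟩ := sInf_lt_iff.1 h
  refine ⟨n, (hasProjectiveDimensionLT_iff.{0} _ _).2 fun i hi Y x => ?_⟩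
  have := (subsingleton_ext_iff.{_, _, 0} (ModuleCat.of R M) Y i).1 (hn Y i hi)
  exact Subsingleton.elim x 0

variable {R : Type u} [CommRing R]

theorem projective_of_hasProjectiveDimensionLE_zero {M : Type u} [AddCommGroup M] [Module R M]
    (h : HasProjectiveDimensionLE (ModuleCat.of R M) 0) : Module.Projective R M :=
  (IsProjective.iff_projective M).2 (projective_iff_hasProjectiveDimensionLT_one.2 h)

theorem hasProjectiveDimensionLE_ker {F M : Type u} [AddCommGroup F] [Module R F]
    [Module.Projective R F] [AddCommGroup M] [Module R M] {g : F →ₗ[R] M}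
    (hg : Function.Surjective g) {n : ℕ} (h : HasProjectiveDimensionLE (ModuleCat.of R M) (n + 1)) :
    HasProjectiveDimensionLE (ModuleCat.of R (LinearMap.ker g)) n :=
  ((LinearMap.shortExact_shortComplexKer hg).hasProjectiveDimensionLT_X₃_iff n
    ((IsProjective.iff_projective F).1 inferInstance)).1 h

end FiniteProjectiveDimension

section BaseChange

open TensorProduct

theorem injective_baseChange_rTensor {R : Type*} (S : Type*) [CommRing R] [CommRing S] [Algebra R S]
    [Module.Flat R S] {K F N : Type*} [AddCommGroup K] [Module R K] [AddCommGroup F] [Module R F]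
    [AddCommGroup N] [Module R N] {f : K →ₗ[R] F} (h : Function.Injective (f.rTensor N)) :
    Function.Injective ((f.baseChange S).rTensor (S ⊗[R] N)) := by
  let eK := AlgebraTensorModule.distribBaseChange R S K N
  let eF := AlgebraTensorModule.distribBaseChange R S F N
  have hcomm : (f.baseChange S).rTensor (S ⊗[R] N) ∘ₗ eK.toLinearMap =
      eF.toLinearMap ∘ₗ (f.rTensor N).baseChange S := by
    ext x y
    simp [eK, eF, AlgebraTensorModule.distribBaseChange_tmul]
  have hinj : Function.Injective ((f.rTensor N).baseChange S) :=
    Module.Flat.lTensor_preserves_injective_linearMap (M := S) _ h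
  refine (Function.Injective.of_comp_iff' _ eK.bijective).1 ?_
  rw [← LinearEquiv.coe_coe, ← LinearMap.coe_comp, hcomm]
  exact eF.injective.comp hinj

variable {R S : Type} [CommRing R] [IsNoetherianRing R] [CommRing S] [IsLocalRing S]
  [Algebra R S] [Module.Flat R S] {M N : Type} [AddCommGroup M] [Module R M]
  [AddCommGroup N] [Module R N]

theorem eDepth_baseChange_tensor_add_one_le [Module.Finite R M] {n : ℕ}
    (hpd : HasProjectiveDimensionLE (ModuleCat.of R M) n)
    (htor : ∀ i, Subsingleton (torGroup R M N (i + 1))) (hM : ¬ Module.Free S (S ⊗[R] M)) :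
    eDepth S ((S ⊗[R] M) ⊗[S] (S ⊗[R] N)) + 1 ≤ eDepth S (S ⊗[R] N) := by
  induction n generalizing M with
  | zero =>
    have := projective_of_hasProjectiveDimensionLE_zero hpd
    exact absurd Module.free_of_flat_of_isLocalRing hM
  | succ n ih =>
    obtain ⟨m, g, hg⟩ := Module.Finite.exists_fin' R M
    have hf := (LinearMap.ker g).subtype_injective
    have hfg := LinearMap.exact_subtype_ker_map g
    have hfN := injective_baseChange_rTensor S
      (injective_rTensor_of_subsingleton_torGroup_one hf hfg hg (htor 0))
    have hfgS := Module.Flat.lTensor_exact S hfg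
    have hgS := LinearMap.lTensor_surjective S hg
    by_cases hK : Module.Free S (S ⊗[R] LinearMap.ker g)
    · exact eDepth_tensor_add_one_le_of_syzygy_free (g := g.baseChange S) hfgS hgS hfN hM
    · exact eDepth_tensor_add_one_le_of_syzygy (g := g.baseChange S) hfgS hgS hfN <|
        ih (hasProjectiveDimensionLE_ker hg hpd)
          (fun i => subsingleton_torGroup_syzygy hf hfg hg (htor (i + 1))) hK

theorem eDepth_add_eDepth_baseChange_tensor_le [Module.Finite R M] {n : ℕ}
    (hpd : HasProjectiveDimensionLE (ModuleCat.of R M) n)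
    (htor : ∀ i, Subsingleton (torGroup R M N (i + 1))) :
    eDepth S S + eDepth S ((S ⊗[R] M) ⊗[S] (S ⊗[R] N)) ≤
      eDepth S (S ⊗[R] M) + eDepth S (S ⊗[R] N) := by
  induction n generalizing M with
  | zero =>
    have := projective_of_hasProjectiveDimensionLE_zero hpd
    have : Module.Free S (S ⊗[R] M) := Module.free_of_flat_of_isLocalRing
    exact eDepth_add_eDepth_tensor_le_of_free
  | succ n ih =>
    by_cases hM : Module.Free S (S ⊗[R] M)
    · exact eDepth_add_eDepth_tensor_le_of_free
    obtain ⟨m, g, hg⟩ := Module.Finite.exists_fin' R M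
    have hf := (LinearMap.ker g).subtype_injective
    have hfg := LinearMap.exact_subtype_ker_map g
    have hfN := injective_baseChange_rTensor S
      (injective_rTensor_of_subsingleton_torGroup_one hf hfg hg (htor 0))
    exact eDepth_add_eDepth_tensor_le_of_syzygy (g := g.baseChange S)
      (Module.Flat.lTensor_preserves_injective_linearMap _ hf) (Module.Flat.lTensor_exact S hfg)
      (LinearMap.lTensor_surjective S hg) hfN
      (eDepth_baseChange_tensor_add_one_le hpd htor hM)
      (ih (hasProjectiveDimensionLE_ker hg hpd)
        fun i => subsingleton_torGroup_syzygy hf hfg hg (htor (i + 1)))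

theorem eDepth_self_le_eDepth_baseChange_add [Module.Finite R M] {n : ℕ}
    (hpd : HasProjectiveDimensionLE (ModuleCat.of R M) n) {q : ℕ}
    (htor : ∀ i, q < i → Subsingleton (torGroup R M N i)) :
    eDepth S S ≤ eDepth S (S ⊗[R] M) + eDepth S (S ⊗[R] N) + q := by
  induction q generalizing M with
  | zero =>
    simpa using le_self_add.trans
      (eDepth_add_eDepth_baseChange_tensor_le (S := S) hpd fun i => htor _ i.succ_pos)
  | succ q ih =>
    obtain ⟨m, g, hg⟩ := Module.Finite.exists_fin' R M
    have hf := (LinearMap.ker g).subtype_injective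
    have hfg := LinearMap.exact_subtype_ker_map g
    have hpdK : HasProjectiveDimensionLE (ModuleCat.of R (LinearMap.ker g)) n :=
      hasProjectiveDimensionLE_ker hg
        (hasProjectiveDimensionLT_of_ge (ModuleCat.of R M) (n + 1) (n + 2) (by omega))
    have htorK : ∀ i, q < i → Subsingleton (torGroup R (LinearMap.ker g) N i)
      | i + 1, hi => subsingleton_torGroup_syzygy hf hfg hg (htor (i + 2) (by omega))
    have hK := ih hpdK htorK
    rw [add_assoc] at hK
    have hM := eDepth_self_le_add_one_of_syzygy
      (f := (LinearMap.ker g).subtype.baseChange S) (g := g.baseChange S)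
      (Module.Flat.lTensor_preserves_injective_linearMap _ hf) (Module.Flat.lTensor_exact S hfg)
      (LinearMap.lTensor_surjective S hg) hK
    simpa only [Nat.cast_add, Nat.cast_one, add_assoc] using hM

end BaseChange

open TensorProduct in
theorem stmt_14_general (R S : Type) [CommRing R] [IsNoetherianRing R] [CommRing S] [IsLocalRing S]
    [Algebra R S] [Module.Flat R S] (M N : Type) [AddCommGroup M] [Module R M] [Module.Finite R M]
    [AddCommGroup N] [Module R N] (hpd : ePd R M < ⊤) (q : ℕ)
    (hq : ∀ i : ℕ, q < i → Subsingleton (torGroup R M N i)) :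
    eDepth S S ≤ eDepth S (S ⊗[R] M) + eDepth S (S ⊗[R] N) + q :=
  have ⟨_, hn⟩ := exists_hasProjectiveDimensionLE_of_ePd_lt_top hpd
  eDepth_self_le_eDepth_baseChange_add hn hq

/-- One-sided Jorgensen dependency inequality: if `pd_R M < ∞` and
`q = sup{ i : Tor_i^R(M, N) ≠ 0 } < ∞`, then for every `p ∈ Supp(M ⊗ N)`,
`depth R_p - depth M_p - depth N_p ≤ q`. -/
theorem stmt_14 (R : Type) [CommRing R] [IsNoetherianRing R] [IsLocalRing R]
    (M N : Type) [AddCommGroup M] [Module R M] [Module.Finite R M] [Nontrivial M]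
    [AddCommGroup N] [Module R N] [Module.Finite R N] [Nontrivial N]
    (hpd : ePd R M < ⊤)
    (q : ℕ) (hq1 : Nontrivial (torGroup R M N q))
    (hq2 : ∀ i : ℕ, q < i → Subsingleton (torGroup R M N i))
    (p : PrimeSpectrum R) (hp : p ∈ Module.support R (TensorProduct R M N)) :
    eDepth (Localization p.asIdeal.primeCompl) (Localization p.asIdeal.primeCompl) ≤
      eDepth (Localization p.asIdeal.primeCompl) (LocalizedModule p.asIdeal.primeCompl M) +
      eDepth (Localization p.asIdeal.primeCompl) (LocalizedModule p.asIdeal.primeCompl N) +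
      (q : ℕ∞) := by
  have : Module.Flat R (Localization p.asIdeal.primeCompl) :=
    IsLocalization.flat _ p.asIdeal.primeCompl
  rw [eDepth_congr_s14 (LocalizedModule.equivTensorProduct p.asIdeal.primeCompl M),
    eDepth_congr_s14 (LocalizedModule.equivTensorProduct p.asIdeal.primeCompl N)]
  exact stmt_14_general R _ M N hpd q hq2
end
end
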